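/- Let Q ∈ H^{1/2}(ℝ^3) be a nonzero radial solution of √(−Δ) Q + Q − (|x|^{-1} ∗ |Q|^2) Q = 0. For μ > 0 set Q_μ(x) = μ^{3/2} Q(μx) and u_μ(t,x) = e^{itμ} Q_μ(x). Then: (i) ‖Q_μ‖_{L^2(ℝ^3)} = ‖Q‖_{L^2(ℝ^3)} for all μ > 0; (ii) for any fixed t > 0, setting μ_1(n) = (π/(2t))(n+1)^2 and μ_2(n) = (π/(2t)) n^2 for n ∈ ℕ, one has ‖u_{μ_1(n)}(t) − u_{μ_2(n)}(t)‖_{L^2(ℝ^3)}^2 = 2‖Q‖_{L^2(ℝ^3)}^2 for all n, while ‖u_{μ_1(n)}(0) − u_{μ_2(n)}(0)‖_{L^2(ℝ^3)} → 0 as n → ∞. Consequently, for the massless (m = 0) boson star equation i∂_t u = √(−Δ)u − (|x|^{-1} ∗ |u|^2)u and any t > 0, the map φ ↦ u(t) fails to be uniformly continuous with respect to the L^2-norm on the set {φ ∈ L^2(ℝ^3) : φ radial, ‖φ‖_{L^2}^2 ≥ ‖Q‖_{L^2}^2}. -/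

import Mathlib

open MeasureTheory Real Complex Filter
open scoped FourierTransform ENNReal Topology

noncomputable section

abbrev Rd : Type := EuclideanSpace ℝ (Fin 3)

/-- Sobolev `H^s` norm (as an extended real), defined on the Fourier side. -/
def HsNorm (s : ℝ) (f : Rd → ℂ) : ℝ≥0∞ :=
  (∫⁻ ξ : Rd, ENNReal.ofReal ((1 + ‖ξ‖ ^ 2) ^ s * ‖𝓕 f ξ‖ ^ 2)) ^ (1 / 2 : ℝ)

/-- Convolution with the Newtonian potential `|x|⁻¹`. -/
def newton (f : Rd → ℂ) (x : Rd) : ℂ := ∫ y : Rd, f y / (‖x - y‖ : ℂ)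

/-- The Fourier multiplier `√(-Δ + a)` with symbol `√(|ξ|² + a)`. -/
def sqrtOp (a : ℝ) (f : Rd → ℂ) : Rd → ℂ :=
  𝓕⁻ fun ξ => ((Real.sqrt (‖ξ‖ ^ 2 + a) : ℝ) : ℂ) * 𝓕 f ξ

/-- Radiality of a function on `ℝ³`. -/
def IsRadial (f : Rd → ℂ) : Prop := ∀ x y : Rd, ‖x‖ = ‖y‖ → f x = f y

/-- `L²`-critical rescaling `Q_μ(x) = μ^{3/2} Q(μx)`. -/
def qScale (Q : Rd → ℂ) (μ : ℝ) : Rd → ℂ := fun x => ((μ ^ (3 / 2 : ℝ) : ℝ) : ℂ) * Q (μ • x)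

/-- The solitary wave `u_μ(t,x) = e^{itμ} Q_μ(x)`. -/
def solWave (Q : Rd → ℂ) (μ t : ℝ) : Rd → ℂ := fun x =>
  Complex.exp (Complex.I * (t * μ : ℝ)) * qScale Q μ x

/-!
Two waves `e^{itμ₁} Q_{μ₁}` and `e^{itμ₂} Q_{μ₂}` whose phases `tμ₁` and `tμ₂` differ by `π/2`
modulo `π` are orthogonal in the real Hilbert space `L²` as soon as `Q` has a constant complex
phase, while their initial data are dilations of each other by the ratio `(1 + 1/n)² → 1` and hence
`L²`-close.

That `Q` has a constant phase follows from a uniqueness property of the equation `√(-Δ) f = W f`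
with the radial potential `W = |x|⁻¹ ∗ |Q|² - 1`, which is nonincreasing in `|x|` by Newton's
theorem. For a real radial solution `f = f(r)` with harmonic extension `F(r, y)` to the half space
`y > 0`, the Hamiltonian `H(r) = ∫₀^∞ (∂ᵣF)² - (∂_yF)² dy + W(r) f(r)²` is nonincreasing. If `f`
vanishes at the origin, then `H(0) ≤ 0 = H(∞)`, so that `H` vanishes identically, which forces `f`
to be constant, hence zero. Apply this to `f = Im(conj(c) Q)`, where `c ≠ 0` is chosen such that
`f(0) = 0`.
-/

/-- The derivative of `sinc` away from the origin; the junk value `sincDeriv 0 = 0` is the correct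
one. -/
def sincDeriv (x : ℝ) : ℝ := (x * Real.cos x - Real.sin x) / x ^ 2

theorem hasDerivAt_sinc {x : ℝ} (hx : x ≠ 0) : HasDerivAt sinc (sincDeriv x) x := by
  have h := (Real.hasDerivAt_sin x).div (hasDerivAt_id x) hx
  refine (h.congr_of_eventuallyEq ?_).congr_deriv (by simp [sincDeriv, mul_comm])
  filter_upwards [isOpen_ne.mem_nhds hx] with y hy using sinc_of_ne_zero hy

theorem hasDerivAt_sincDeriv {x : ℝ} (hx : x ≠ 0) :
    HasDerivAt sincDeriv (-sinc x - 2 / x * sincDeriv x) x := by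
  have h := (((hasDerivAt_id x).mul (Real.hasDerivAt_cos x)).sub (Real.hasDerivAt_sin x)).div
    ((hasDerivAt_id x).pow 2) (pow_ne_zero 2 hx)
  refine h.congr_deriv ?_
  simp only [sinc_of_ne_zero hx, sincDeriv, id, Pi.mul_apply, Pi.sub_apply, Pi.pow_apply]
  field_simp
  ring

theorem measurable_sincDeriv : Measurable sincDeriv := by
  unfold sincDeriv
  fun_prop

theorem abs_sincDeriv_le {x : ℝ} (hx : 0 < x) : |sincDeriv x| ≤ x := by
  have hsin : x - x ^ 3 / 6 < Real.sin x := Real.sin_gt_sub_cube hx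
  have hcos : x * (1 - x ^ 2 / 2) ≤ x * Real.cos x :=
    mul_le_mul_of_nonneg_left Real.one_sub_sq_div_two_le_cos hx.le
  have hcos' : x * Real.cos x ≤ x := mul_le_of_le_one_right hx.le (Real.cos_le_one x)
  rw [sincDeriv, abs_div, abs_of_pos (pow_pos hx 2), div_le_iff₀ (pow_pos hx 2), abs_le]
  constructor <;> nlinarith [Real.sin_le hx.le, pow_pos hx 3]

theorem abs_sincDeriv_le_two_div {x : ℝ} (hx : 0 < x) : |sincDeriv x| ≤ 2 / x := by
  have hcos : |x * Real.cos x| ≤ x := by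
    rw [abs_mul, abs_of_pos hx]
    exact mul_le_of_le_one_right hx.le (Real.abs_cos_le_one x)
  have hsin : |Real.sin x| ≤ x := Real.abs_sin_le_abs.trans_eq (abs_of_pos hx)
  rw [sincDeriv, abs_div, abs_of_pos (pow_pos hx 2), div_le_div_iff₀ (pow_pos hx 2) hx]
  nlinarith [abs_sub (x * Real.cos x) (Real.sin x)]

theorem abs_sincDeriv_le_two {x : ℝ} (hx : 0 < x) : |sincDeriv x| ≤ 2 := by
  rcases le_total x 1 with h1 | h1
  · linarith [abs_sincDeriv_le hx]
  · exact (abs_sincDeriv_le_two_div hx).trans (div_le_self zero_le_two h1)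

theorem tendsto_sincDeriv_nhdsGT_zero : Tendsto sincDeriv (𝓝[>] 0) (𝓝 0) := by
  refine squeeze_zero_norm' ?_ (tendsto_id.mono_left nhdsWithin_le_nhds)
  filter_upwards [self_mem_nhdsWithin] with x hx using abs_sincDeriv_le hx

theorem tendsto_sincDeriv_atTop : Tendsto sincDeriv atTop (𝓝 0) := by
  refine squeeze_zero_norm' ?_ ((tendsto_const_nhds (x := (2 : ℝ))).div_atTop tendsto_id)
  filter_upwards [eventually_gt_atTop 0] with x hx using abs_sincDeriv_le_two_div hx

theorem tendsto_sinc_atTop : Tendsto sinc atTop (𝓝 0) := by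
  refine squeeze_zero_norm' ?_ tendsto_inv_atTop_zero
  filter_upwards [eventually_gt_atTop 0] with x hx
  rw [sinc_of_ne_zero hx.ne', norm_div, Real.norm_of_nonneg hx.le, div_eq_mul_inv]
  exact mul_le_of_le_one_left (inv_nonneg.2 hx.le) (Real.abs_sin_le_one x)

theorem abs_sinc_sub_one_le {x : ℝ} (hx : 0 < x) : |sinc x - 1| ≤ x := by
  rcases le_total x 2 with h2 | h2
  · have hsin : x - x ^ 3 / 6 < Real.sin x := Real.sin_gt_sub_cube hx
    rw [sinc_of_ne_zero hx.ne', div_sub_one hx.ne', abs_div, abs_of_pos hx, div_le_iff₀ hx, abs_le]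
    constructor <;> nlinarith [Real.sin_le hx.le, pow_pos hx 2]
  · linarith [abs_sub (sinc x) 1, abs_sinc_le_one x, abs_one (α := ℝ)]

section LaplaceForm

variable {Ω : Type*} [MeasurableSpace Ω] {m : Measure Ω} {κ a : Ω → ℝ}

/-- The quadratic form `∬ κκ'/(κ+κ') a a'`, which is the squared `L²(0,∞)` norm of the Laplace
transform `y ↦ ∫ κ e^{-κy} a`. For `κ` the frequency, `a` is a function on the boundary of a half
space in the frequency picture, and the form is the Dirichlet energy of its harmonic extension. -/
def laplaceForm (m : Measure Ω) (κ a : Ω → ℝ) : ℝ :=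
  ∫ p, κ p.1 * κ p.2 / (κ p.1 + κ p.2) * (a p.1 * a p.2) ∂m.prod m

/-- Weights that may serve as density over the frequencies `κ`: the weight has finite zeroth and
first moments. -/
structure IsSpectralDensity (m : Measure Ω) (κ a : Ω → ℝ) : Prop where
  aemeasurable : AEMeasurable κ m
  pos : ∀ᵐ ω ∂m, 0 < κ ω
  integrable : Integrable a m
  integrable_mul : Integrable (fun ω ↦ κ ω * a ω) m

namespace IsSpectralDensity

theorem mul_bdd (h : IsSpectralDensity m κ a) {φ : Ω → ℝ} {C : ℝ}
    (hφ : AEStronglyMeasurable φ m) (hC : ∀ᵐ ω ∂m, |φ ω| ≤ C) :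
    IsSpectralDensity m κ fun ω ↦ a ω * φ ω where
  aemeasurable := h.aemeasurable
  pos := h.pos
  integrable := h.integrable.mul_bdd hφ hC
  integrable_mul := by simpa only [mul_assoc] using h.integrable_mul.mul_bdd hφ hC

theorem pos_prod (h : IsSpectralDensity m κ a) :
    ∀ᵐ p ∂m.prod m, 0 < κ p.1 ∧ 0 < κ p.2 :=
  (Measure.quasiMeasurePreserving_fst.ae h.pos).and (Measure.quasiMeasurePreserving_snd.ae h.pos)

theorem aemeasurable_prod (h : IsSpectralDensity m κ a) :
    AEMeasurable (fun p ↦ κ p.1) (m.prod m) ∧ AEMeasurable (fun p ↦ κ p.2) (m.prod m) :=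
  ⟨h.aemeasurable.comp_quasiMeasurePreserving Measure.quasiMeasurePreserving_fst,
    h.aemeasurable.comp_quasiMeasurePreserving Measure.quasiMeasurePreserving_snd⟩

theorem aestronglyMeasurable_form (h : IsSpectralDensity m κ a) :
    AEStronglyMeasurable
      (fun p ↦ κ p.1 * κ p.2 / (κ p.1 + κ p.2) * (a p.1 * a p.2)) (m.prod m) := by
  obtain ⟨hκ₁, hκ₂⟩ := h.aemeasurable_prod
  exact ((hκ₁.mul hκ₂).div (hκ₁.add hκ₂)).aestronglyMeasurable.mul
    (h.integrable.mul_prod h.integrable).aestronglyMeasurable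

theorem integrable_bound (h : IsSpectralDensity m κ a) :
    Integrable (fun p : Ω × Ω ↦ |κ p.1 * a p.1| * |a p.2|) (m.prod m) :=
  h.integrable_mul.abs.mul_prod h.integrable.abs

end IsSpectralDensity

theorem abs_mul_div_add_le {k l : ℝ} (hk : 0 < k) (hl : 0 < l) : |k * l / (k + l)| ≤ k := by
  rw [abs_of_pos (by positivity), div_le_iff₀ (by positivity)]
  nlinarith [sq_nonneg k]

theorem abs_form_le {k l x y X Y : ℝ} (hk : 0 < k) (hl : 0 < l) (hx : |x| ≤ |X|) (hy : |y| ≤ |Y|) :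
    |k * l / (k + l) * (x * y)| ≤ |k * X| * |Y| := by
  rw [abs_mul, abs_mul, abs_mul, abs_of_pos hk, mul_assoc]
  gcongr
  simpa only [abs_of_pos hk] using abs_mul_div_add_le hk hl

theorem IsSpectralDensity.integrable_form (h : IsSpectralDensity m κ a) :
    Integrable (fun p ↦ κ p.1 * κ p.2 / (κ p.1 + κ p.2) * (a p.1 * a p.2)) (m.prod m) := by
  refine h.integrable_bound.mono' h.aestronglyMeasurable_form ?_
  filter_upwards [h.pos_prod] with p hp using abs_form_le hp.1 hp.2 le_rfl le_rfl

theorem tendsto_laplaceForm {ι : Type*} {l : Filter ι} [l.IsCountablyGenerated]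
    {A : ι → Ω → ℝ} {A₀ b : Ω → ℝ} (hA : ∀ᶠ i in l, IsSpectralDensity m κ (A i))
    (hb : IsSpectralDensity m κ b) (hAb : ∀ᶠ i in l, ∀ᵐ ω ∂m, |A i ω| ≤ |b ω|)
    (hlim : ∀ᵐ ω ∂m, Tendsto (A · ω) l (𝓝 (A₀ ω))) :
    Tendsto (fun i ↦ laplaceForm m κ (A i)) l (𝓝 (laplaceForm m κ A₀)) := by
  refine tendsto_integral_filter_of_dominated_convergence _
    (hA.mono fun i hi ↦ hi.aestronglyMeasurable_form) ?_ hb.integrable_bound ?_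
  · filter_upwards [hAb] with i hi
    filter_upwards [hb.pos_prod, Measure.quasiMeasurePreserving_fst.ae hi,
      Measure.quasiMeasurePreserving_snd.ae hi] with p hp h₁ h₂ using abs_form_le hp.1 hp.2 h₁ h₂
  · filter_upwards [Measure.quasiMeasurePreserving_fst.ae hlim,
      Measure.quasiMeasurePreserving_snd.ae hlim] with p h₁ h₂ using (h₁.mul h₂).const_mul _

theorem integral_mul_exp_mul_mul_exp {k l : ℝ} (hk : 0 < k) (hl : 0 < l) :
    ∫ y in Set.Ioi 0, (k * Real.exp (-k * y)) * (l * Real.exp (-l * y)) = k * l / (k + l) := by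
  have hexp (y : ℝ) : (k * Real.exp (-k * y)) * (l * Real.exp (-l * y)) =
      k * l * Real.exp (-(k + l) * y) := by
    rw [mul_mul_mul_comm, ← Real.exp_add]
    ring_nf
  simp_rw [hexp, integral_const_mul, integral_exp_mul_Ioi (neg_lt_zero.2 (add_pos hk hl))]
  field_simp
  simp

/-- The Laplace transform of `κ a` in the variable dual to the frequency `κ`. -/
def laplaceTransform (m : Measure Ω) (κ a : Ω → ℝ) (y : ℝ) : ℝ :=
  ∫ ω, κ ω * Real.exp (-κ ω * y) * a ω ∂m

theorem integral_exp_prod_eq_laplaceTransform_sq [SFinite m] (y : ℝ) :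
    ∫ p, (κ p.1 * Real.exp (-κ p.1 * y)) * (κ p.2 * Real.exp (-κ p.2 * y)) * (a p.1 * a p.2)
      ∂m.prod m = laplaceTransform m κ a y ^ 2 := by
  rw [laplaceTransform, sq, ← integral_prod_mul]
  congr 1 with p
  ring

theorem IsSpectralDensity.integrable_exp_prod (h : IsSpectralDensity m κ a) :
    Integrable (fun q : (Ω × Ω) × ℝ ↦ (κ q.1.1 * Real.exp (-κ q.1.1 * q.2)) *
      (κ q.1.2 * Real.exp (-κ q.1.2 * q.2)) * (a q.1.1 * a q.1.2))
      ((m.prod m).prod (volume.restrict (Set.Ioi 0))) := by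
  obtain ⟨hκ₁, hκ₂⟩ := h.aemeasurable_prod
  replace hκ₁ := hκ₁.comp_fst (ν := volume.restrict (Set.Ioi (0 : ℝ)))
  replace hκ₂ := hκ₂.comp_fst (ν := volume.restrict (Set.Ioi (0 : ℝ)))
  have ha := (h.integrable.mul_prod h.integrable).aemeasurable.comp_fst
    (ν := volume.restrict (Set.Ioi (0 : ℝ)))
  have hexp₁ := (hκ₁.neg.mul measurable_snd.aemeasurable).exp
  have hexp₂ := (hκ₂.neg.mul measurable_snd.aemeasurable).exp
  refine (integrable_prod_iff ?_).2 ⟨?_, ?_⟩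
  · exact (((hκ₁.mul hexp₁).mul (hκ₂.mul hexp₂)).mul ha).aestronglyMeasurable
  · filter_upwards [h.pos_prod] with p hp
    have hne := (div_pos (mul_pos hp.1 hp.2) (add_pos hp.1 hp.2)).ne'
    rw [← integral_mul_exp_mul_mul_exp hp.1 hp.2] at hne
    exact (Integrable.of_integral_ne_zero hne).mul_const _
  · refine h.integrable_form.norm.congr ?_
    filter_upwards [h.pos_prod] with p ⟨hp₁, hp₂⟩
    have hnorm (y : ℝ) : ‖(κ p.1 * Real.exp (-κ p.1 * y)) * (κ p.2 * Real.exp (-κ p.2 * y)) *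
        (a p.1 * a p.2)‖ = (κ p.1 * Real.exp (-κ p.1 * y)) * (κ p.2 * Real.exp (-κ p.2 * y)) *
          ‖a p.1 * a p.2‖ := by
      rw [norm_mul, Real.norm_of_nonneg (by positivity)]
    rw [norm_mul, Real.norm_of_nonneg (by positivity)]
    rw [integral_congr_ae (ae_of_all _ hnorm), integral_mul_const,
      integral_mul_exp_mul_mul_exp hp₁ hp₂]

theorem IsSpectralDensity.laplaceForm_eq [SFinite m] (h : IsSpectralDensity m κ a) :
    laplaceForm m κ a = ∫ y in Set.Ioi 0, laplaceTransform m κ a y ^ 2 := by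
  simp_rw [← integral_exp_prod_eq_laplaceTransform_sq]
  rw [← integral_integral_swap h.integrable_exp_prod]
  refine integral_congr_ae ?_
  filter_upwards [h.pos_prod] with p hp
  rw [integral_mul_const, integral_mul_exp_mul_mul_exp hp.1 hp.2]

theorem IsSpectralDensity.laplaceForm_nonneg [SFinite m] (h : IsSpectralDensity m κ a) :
    0 ≤ laplaceForm m κ a :=
  h.laplaceForm_eq ▸ integral_nonneg fun _ ↦ sq_nonneg _

theorem IsSpectralDensity.continuousOn_laplaceTransform (h : IsSpectralDensity m κ a) :
    ContinuousOn (laplaceTransform m κ a) (Set.Ici 0) := by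
  refine continuousOn_of_dominated (bound := fun ω ↦ |κ ω * a ω|) (fun y _ ↦ ?_) (fun y hy ↦ ?_)
    h.integrable_mul.abs (ae_of_all _ fun ω ↦ by fun_prop)
  · have := h.aemeasurable
    exact (AEMeasurable.mul (by fun_prop) h.integrable.aemeasurable).aestronglyMeasurable
  · filter_upwards [h.pos] with ω hω
    have hexp : Real.exp (-κ ω * y) ≤ 1 :=
      Real.exp_le_one_iff.2 (mul_nonpos_of_nonpos_of_nonneg (neg_nonpos.2 hω.le) hy)
    rw [mul_right_comm, norm_mul, Real.norm_eq_abs, Real.norm_of_nonneg (Real.exp_nonneg _)]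
    exact mul_le_of_le_one_right (abs_nonneg _) hexp

theorem IsSpectralDensity.integral_eq_zero_of_laplaceForm_eq_zero [SFinite m]
    (h : IsSpectralDensity m κ a) (h0 : laplaceForm m κ a = 0) : ∫ ω, κ ω * a ω ∂m = 0 := by
  have hint : IntegrableOn (fun y ↦ laplaceTransform m κ a y ^ 2) (Set.Ioi 0) :=
    h.integrable_exp_prod.integral_prod_right.congr
      (ae_of_all _ integral_exp_prod_eq_laplaceTransform_sq)
  have hae : laplaceTransform m κ a =ᵐ[volume.restrict (Set.Ici 0)] 0 := by
    rw [← restrict_Ioi_eq_restrict_Ici]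
    rw [h.laplaceForm_eq, setIntegral_eq_zero_iff_of_nonneg_ae (ae_of_all _ fun _ ↦ sq_nonneg _)
      hint] at h0
    exact h0.mono fun y hy ↦ (pow_eq_zero_iff two_ne_zero).1 hy
  have hzero : laplaceTransform m κ a 0 = 0 :=
    Measure.eqOn_of_ae_eq hae h.continuousOn_laplaceTransform continuousOn_const
      (by rw [interior_Ici, closure_Ioi]) Set.self_mem_Ici
  simpa [laplaceTransform] using hzero

end LaplaceForm

section Hamiltonian

variable {Ω : Type*} [MeasurableSpace Ω] {m : Measure Ω} {κ b : Ω → ℝ} {w w' : ℝ → ℝ} {r : ℝ}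

/-- The radial function `r ↦ ∫ b sinc(κr)` with spectral density `b`. -/
def sincTransform (m : Measure Ω) (κ b : Ω → ℝ) (r : ℝ) : ℝ := ∫ ω, b ω * sinc (κ ω * r) ∂m

/-- The radial derivative of `sincTransform m κ b`. -/
def sincTransformDeriv (m : Measure Ω) (κ b : Ω → ℝ) (r : ℝ) : ℝ :=
  ∫ ω, κ ω * (b ω * sincDeriv (κ ω * r)) ∂m

/-- The Dirichlet part of the Hamiltonian. With `F(r, y) = ∫ b e^{-κy} sinc(κr)` the harmonic
extension of `sincTransform m κ b`, it is `∫₀^∞ (∂ᵣF)² - (∂_yF)² dy`. -/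
def kineticForm (m : Measure Ω) (κ b : Ω → ℝ) (r : ℝ) : ℝ :=
  laplaceForm m κ (fun ω ↦ b ω * sincDeriv (κ ω * r)) -
    laplaceForm m κ (fun ω ↦ b ω * sinc (κ ω * r))

namespace IsSpectralDensity

theorem mul_sinc (h : IsSpectralDensity m κ b) (r : ℝ) :
    IsSpectralDensity m κ fun ω ↦ b ω * sinc (κ ω * r) :=
  h.mul_bdd (measurable_sinc.comp_aemeasurable (h.aemeasurable.mul_const r)).aestronglyMeasurable
    (ae_of_all _ fun _ ↦ abs_sinc_le_one _)

theorem abs_sincDeriv_le (h : IsSpectralDensity m κ b) (hr : 0 < r) :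
    ∀ᵐ ω ∂m, |sincDeriv (κ ω * r)| ≤ 2 := by
  filter_upwards [h.pos] with ω hω using abs_sincDeriv_le_two (mul_pos hω hr)

theorem mul_sincDeriv (h : IsSpectralDensity m κ b) (hr : 0 < r) :
    IsSpectralDensity m κ fun ω ↦ b ω * sincDeriv (κ ω * r) :=
  h.mul_bdd
    (measurable_sincDeriv.comp_aemeasurable (h.aemeasurable.mul_const r)).aestronglyMeasurable
    (h.abs_sincDeriv_le hr)

theorem hasDerivAt_sincTransform (h : IsSpectralDensity m κ b) (hr : 0 < r) :
    HasDerivAt (sincTransform m κ b) (sincTransformDeriv m κ b r) r := by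
  refine (hasDerivAt_integral_of_dominated_loc_of_deriv_le
    (F' := fun s ω ↦ κ ω * (b ω * sincDeriv (κ ω * s))) (bound := fun ω ↦ |κ ω * b ω| * 2)
    (Ioi_mem_nhds hr) (Eventually.of_forall fun s ↦ (h.mul_sinc s).integrable.aestronglyMeasurable)
    (h.mul_sinc r).integrable (h.mul_sincDeriv hr).integrable_mul.aestronglyMeasurable ?_
    (h.integrable_mul.abs.mul_const 2) ?_).2
  · filter_upwards [h.pos] with ω hω s hs
    rw [← mul_assoc, norm_mul]
    exact mul_le_mul_of_nonneg_left (abs_sincDeriv_le_two (mul_pos hω hs)) (abs_nonneg _)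
  · filter_upwards [h.pos] with ω hω s hs
    have hd := (hasDerivAt_sinc (mul_pos hω hs).ne').comp s ((hasDerivAt_id s).const_mul (κ ω))
    exact (hd.const_mul (b ω)).congr_deriv (by ring)

theorem tendsto_sincTransform_atTop (h : IsSpectralDensity m κ b) :
    Tendsto (sincTransform m κ b) atTop (𝓝 0) := by
  rw [← integral_zero Ω ℝ (μ := m)]
  refine tendsto_integral_filter_of_dominated_convergence (fun ω ↦ |b ω|)
    (Eventually.of_forall fun s ↦ (h.mul_sinc s).integrable.aestronglyMeasurable)
    (Eventually.of_forall fun s ↦ ae_of_all _ fun ω ↦ ?_) h.integrable.abs ?_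
  · rw [norm_mul]
    exact mul_le_of_le_one_right (abs_nonneg _) (abs_sinc_le_one _)
  · filter_upwards [h.pos] with ω hω
    simpa using (tendsto_sinc_atTop.comp (tendsto_id.const_mul_atTop hω)).const_mul (b ω)

theorem abs_sincTransform_le (h : IsSpectralDensity m κ b) (hb0 : ∫ ω, b ω ∂m = 0) (hr : 0 < r) :
    |sincTransform m κ b r| ≤ (∫ ω, |κ ω * b ω| ∂m) * r := by
  rw [← sub_zero (sincTransform m κ b r), ← hb0, sincTransform,
    ← integral_sub (h.mul_sinc r).integrable h.integrable, ← integral_mul_const, ← Real.norm_eq_abs]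
  refine norm_integral_le_of_norm_le (h.integrable_mul.abs.mul_const r) ?_
  filter_upwards [h.pos] with ω hω
  calc ‖b ω * sinc (κ ω * r) - b ω‖ = |b ω| * |sinc (κ ω * r) - 1| := by
        rw [← mul_sub_one, norm_mul, Real.norm_eq_abs, Real.norm_eq_abs]
    _ ≤ |b ω| * (κ ω * r) :=
        mul_le_mul_of_nonneg_left (abs_sinc_sub_one_le (mul_pos hω hr)) (abs_nonneg _)
    _ = |κ ω * b ω| * r := by rw [abs_mul, abs_of_pos hω]; ring

theorem tendsto_kineticForm (h : IsSpectralDensity m κ b) {l : Filter ℝ}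
    [l.IsCountablyGenerated] {c : ℝ} (hl : ∀ᶠ s in l, 0 < s)
    (hS : ∀ᵐ ω ∂m, Tendsto (fun s ↦ sinc (κ ω * s)) l (𝓝 c))
    (hD : ∀ᵐ ω ∂m, Tendsto (fun s ↦ sincDeriv (κ ω * s)) l (𝓝 0)) :
    Tendsto (kineticForm m κ b) l (𝓝 (-laplaceForm m κ fun ω ↦ b ω * c)) := by
  have hzero : laplaceForm m κ (fun ω ↦ b ω * 0) = 0 := by simp [laplaceForm]
  rw [← zero_sub, ← hzero]
  refine Tendsto.sub (tendsto_laplaceForm (hl.mono fun s hs ↦ h.mul_sincDeriv hs)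
    (h.mul_bdd (φ := fun _ ↦ 2) aestronglyMeasurable_const (ae_of_all _ fun _ ↦ le_rfl))
    (hl.mono fun s hs ↦ ?_) ?_) (tendsto_laplaceForm (Eventually.of_forall h.mul_sinc) h
    (Eventually.of_forall fun s ↦ ae_of_all _ fun ω ↦ ?_) ?_)
  · filter_upwards [h.abs_sincDeriv_le hs] with ω hω
    simpa only [abs_mul, abs_two] using mul_le_mul_of_nonneg_left hω (abs_nonneg (b ω))
  · filter_upwards [hD] with ω hω using hω.const_mul _
  · simpa only [abs_mul] using mul_le_of_le_one_right (abs_nonneg (b ω)) (abs_sinc_le_one _)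
  · filter_upwards [hS] with ω hω using hω.const_mul _

theorem tendsto_kineticForm_atTop (h : IsSpectralDensity m κ b) :
    Tendsto (kineticForm m κ b) atTop (𝓝 0) := by
  have hzero : -laplaceForm m κ (fun ω ↦ b ω * 0) = 0 := by simp [laplaceForm]
  rw [← hzero]
  refine h.tendsto_kineticForm (eventually_gt_atTop 0) ?_ ?_
  · filter_upwards [h.pos] with ω hω
    exact tendsto_sinc_atTop.comp (tendsto_id.const_mul_atTop hω)
  · filter_upwards [h.pos] with ω hω
    exact tendsto_sincDeriv_atTop.comp (tendsto_id.const_mul_atTop hω)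

theorem tendsto_kineticForm_zero (h : IsSpectralDensity m κ b) :
    Tendsto (kineticForm m κ b) (𝓝[>] 0) (𝓝 (-laplaceForm m κ b)) := by
  have hone : laplaceForm m κ b = laplaceForm m κ fun ω ↦ b ω * 1 := by simp only [mul_one]
  rw [hone]
  refine h.tendsto_kineticForm self_mem_nhdsWithin (ae_of_all _ fun ω ↦ ?_) ?_
  · have hcont : Continuous fun s ↦ sinc (κ ω * s) := by fun_prop
    exact (hcont.tendsto' 0 1 (by simp)).mono_left nhdsWithin_le_nhds
  · filter_upwards [h.pos] with ω hω
    refine tendsto_sincDeriv_nhdsGT_zero.comp (tendsto_nhdsWithin_iff.2 ⟨?_, ?_⟩)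
    · exact ((continuous_const_mul (κ ω)).tendsto' 0 0 (mul_zero _)).mono_left nhdsWithin_le_nhds
    · filter_upwards [self_mem_nhdsWithin] with s hs using mul_pos hω hs

end IsSpectralDensity

/-- The kernel of `kineticForm`, at frequencies `k`, `l` with weights `x`, `y`. -/
def kineticKernel (k l x y r : ℝ) : ℝ :=
  k * l / (k + l) * ((x * sincDeriv (k * r)) * (y * sincDeriv (l * r))) -
    k * l / (k + l) * ((x * sinc (k * r)) * (y * sinc (l * r)))

/-- The radial derivative of `kineticKernel`. In the first two terms the factor `k + l` from
differentiating cancels the denominator, so that they decouple. -/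
def kineticKernelDeriv (k l x y r : ℝ) : ℝ :=
  -((k * (x * sinc (k * r))) * (l * (y * sincDeriv (l * r))) +
      (k * (x * sincDeriv (k * r))) * (l * (y * sinc (l * r)))) -
    4 / r * (k * l / (k + l) * ((x * sincDeriv (k * r)) * (y * sincDeriv (l * r))))

theorem hasDerivAt_kineticKernel {k l : ℝ} (hk : 0 < k) (hl : 0 < l) (hr : 0 < r) (x y : ℝ) :
    HasDerivAt (kineticKernel k l x y) (kineticKernelDeriv k l x y r) r := by
  have hS {k : ℝ} (hk : 0 < k) (x : ℝ) :=
    (((hasDerivAt_sinc (mul_pos hk hr).ne').comp r ((hasDerivAt_id r).const_mul k)).const_mul x)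
  have hD {k : ℝ} (hk : 0 < k) (x : ℝ) :=
    (((hasDerivAt_sincDeriv (mul_pos hk hr).ne').comp r
      ((hasDerivAt_id r).const_mul k)).const_mul x)
  refine ((((hD hk x).mul (hD hl y)).const_mul (k * l / (k + l))).sub
    (((hS hk x).mul (hS hl y)).const_mul (k * l / (k + l)))).congr_deriv ?_
  simp only [kineticKernelDeriv, Function.comp_apply, mul_one]
  field_simp
  ring

theorem abs_kineticKernelDeriv_le {k l r₀ : ℝ} (hk : 0 < k) (hl : 0 < l) (hr₀ : 0 < r₀)
    (hr : r₀ < r) (x y : ℝ) :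
    |kineticKernelDeriv k l x y r| ≤ 4 * (|k * x| * |l * y|) + 16 / r₀ * (|k * x| * |y|) := by
  have hD {k : ℝ} (hk : 0 < k) (x : ℝ) : |x * sincDeriv (k * r)| ≤ 2 * |x| := by
    rw [abs_mul, mul_comm]
    exact mul_le_mul_of_nonneg_right (abs_sincDeriv_le_two (mul_pos hk (hr₀.trans hr)))
      (abs_nonneg _)
  have hS (k x : ℝ) : |x * sinc (k * r)| ≤ |x| := by
    rw [abs_mul]
    exact mul_le_of_le_one_right (abs_nonneg _) (abs_sinc_le_one _)
  have hSD {k l : ℝ} (hl : 0 < l) (x y : ℝ) :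
      |k * (x * sinc (k * r)) * (l * (y * sincDeriv (l * r)))| ≤ 2 * (|k * x| * |l * y|) := by
    rw [← mul_assoc k, ← mul_assoc l, abs_mul, mul_left_comm]
    exact mul_le_mul (hS _ _) (hD hl _) (abs_nonneg _) (abs_nonneg _)
  have hDD : |k * l / (k + l) * ((x * sincDeriv (k * r)) * (y * sincDeriv (l * r)))| ≤
      4 * (|k * x| * |y|) := by
    refine (abs_form_le (X := 2 * x) (Y := 2 * y) hk hl ?_ ?_).trans_eq ?_
    · simpa only [abs_mul, abs_two] using hD hk x
    · simpa only [abs_mul, abs_two] using hD hl y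
    · simp only [abs_mul, abs_two]
      ring
  refine (abs_sub _ _).trans (add_le_add ?_ ?_)
  · rw [abs_neg, mul_comm (k * (x * sincDeriv (k * r)))]
    refine (abs_add_le _ _).trans ?_
    linarith [hSD (k := k) hl x y, hSD (k := l) hk y x, mul_comm |l * y| |k * x|]
  · have hr₀r : 4 / r ≤ 4 / r₀ := div_le_div_of_nonneg_left zero_le_four hr₀ hr.le
    rw [abs_mul, abs_of_pos (div_pos four_pos (hr₀.trans hr))]
    refine (mul_le_mul hr₀r hDD (abs_nonneg _) (by positivity)).trans_eq (by ring)

namespace IsSpectralDensity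

theorem integrable_kineticKernelDeriv (h : IsSpectralDensity m κ b) (hr : 0 < r) :
    Integrable (fun p ↦ kineticKernelDeriv (κ p.1) (κ p.2) (b p.1) (b p.2) r) (m.prod m) :=
  (((h.mul_sinc r).integrable_mul.mul_prod (h.mul_sincDeriv hr).integrable_mul).add
    ((h.mul_sincDeriv hr).integrable_mul.mul_prod (h.mul_sinc r).integrable_mul)).neg.sub
    ((h.mul_sincDeriv hr).integrable_form.const_mul _)

theorem integral_kineticKernelDeriv [SFinite m] (h : IsSpectralDensity m κ b) (hr : 0 < r) :
    ∫ p, kineticKernelDeriv (κ p.1) (κ p.2) (b p.1) (b p.2) r ∂m.prod m =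
      -2 * (sincTransform m κ (fun ω ↦ κ ω * b ω) r * sincTransformDeriv m κ b r) -
        4 / r * laplaceForm m κ (fun ω ↦ b ω * sincDeriv (κ ω * r)) := by
  have hSD := (h.mul_sinc r).integrable_mul.mul_prod (h.mul_sincDeriv hr).integrable_mul
  have hDS := (h.mul_sincDeriv hr).integrable_mul.mul_prod (h.mul_sinc r).integrable_mul
  have hsplit := integral_sub (hSD.add hDS).neg
    ((h.mul_sincDeriv hr).integrable_form.const_mul (4 / r))
  refine hsplit.trans ?_
  simp only [Pi.neg_apply, Pi.add_apply]
  have hprod (f g : Ω → ℝ) :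
      ∫ p, f p.1 * g p.2 ∂m.prod m = (∫ ω, f ω ∂m) * ∫ ω, g ω ∂m := integral_prod_mul f g
  rw [integral_neg, integral_add hSD hDS, integral_const_mul,
    hprod (fun ω ↦ κ ω * (b ω * sinc (κ ω * r))) (fun ω ↦ κ ω * (b ω * sincDeriv (κ ω * r))),
    hprod (fun ω ↦ κ ω * (b ω * sincDeriv (κ ω * r))) (fun ω ↦ κ ω * (b ω * sinc (κ ω * r)))]
  simp only [sincTransform, sincTransformDeriv, laplaceForm, mul_assoc]
  ring

theorem integrable_kineticKernel (h : IsSpectralDensity m κ b) (hr : 0 < r) :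
    Integrable (fun p ↦ kineticKernel (κ p.1) (κ p.2) (b p.1) (b p.2) r) (m.prod m) :=
  (h.mul_sincDeriv hr).integrable_form.sub (h.mul_sinc r).integrable_form

theorem hasDerivAt_kineticForm [SFinite m] (h : IsSpectralDensity m κ b) (hr : 0 < r) :
    HasDerivAt (kineticForm m κ b)
      (-2 * (sincTransform m κ (fun ω ↦ κ ω * b ω) r * sincTransformDeriv m κ b r) -
        4 / r * laplaceForm m κ (fun ω ↦ b ω * sincDeriv (κ ω * r))) r := by
  have hkernel : kineticForm m κ b =ᶠ[𝓝 r]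
      fun s ↦ ∫ p, kineticKernel (κ p.1) (κ p.2) (b p.1) (b p.2) s ∂m.prod m := by
    filter_upwards [Ioi_mem_nhds hr] with s hs
    exact (integral_sub (h.mul_sincDeriv hs).integrable_form (h.mul_sinc s).integrable_form).symm
  rw [← h.integral_kineticKernelDeriv hr]
  refine HasDerivAt.congr_of_eventuallyEq ?_ hkernel
  refine (hasDerivAt_integral_of_dominated_loc_of_deriv_le
    (F' := fun s p ↦ kineticKernelDeriv (κ p.1) (κ p.2) (b p.1) (b p.2) s)
    (Ioi_mem_nhds (half_lt_self hr)) ?_ (h.integrable_kineticKernel hr)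
    (h.integrable_kineticKernelDeriv hr).aestronglyMeasurable ?_
    (((h.integrable_mul.abs.mul_prod h.integrable_mul.abs).const_mul 4).add
      (h.integrable_bound.const_mul (16 / (r / 2)))) ?_).2
  · filter_upwards [Ioi_mem_nhds hr] with s hs
    exact (h.integrable_kineticKernel hs).aestronglyMeasurable
  · filter_upwards [h.pos_prod] with p hp s hs
    exact abs_kineticKernelDeriv_le hp.1 hp.2 (half_pos hr) hs _ _
  · filter_upwards [h.pos_prod] with p hp s hs
    exact hasDerivAt_kineticKernel hp.1 hp.2 ((half_pos hr).trans hs) _ _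

end IsSpectralDensity

/-- The Hamiltonian of the equation `g = w f`, where `f` has spectral density `b` and `g` has
spectral density `κ b`; cf. Frank and Lenzmann's uniqueness argument for ground states. -/
def hamiltonian (m : Measure Ω) (κ b : Ω → ℝ) (w : ℝ → ℝ) (r : ℝ) : ℝ :=
  kineticForm m κ b r + w r * sincTransform m κ b r ^ 2

namespace IsSpectralDensity

theorem hasDerivAt_hamiltonian [SFinite m] (h : IsSpectralDensity m κ b) (hr : 0 < r) {w₁ : ℝ}
    (hw : HasDerivAt w w₁ r)
    (heq : sincTransform m κ (fun ω ↦ κ ω * b ω) r = w r * sincTransform m κ b r) :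
    HasDerivAt (hamiltonian m κ b w) (w₁ * sincTransform m κ b r ^ 2 -
      4 / r * laplaceForm m κ (fun ω ↦ b ω * sincDeriv (κ ω * r))) r := by
  have hpot := hw.mul ((h.hasDerivAt_sincTransform hr).pow 2)
  refine ((h.hasDerivAt_kineticForm hr).add hpot).congr_deriv ?_
  rw [heq]
  simp only [Pi.pow_apply, Nat.cast_ofNat]
  ring

theorem tendsto_hamiltonian_atTop (h : IsSpectralDensity m κ b) {M : ℝ}
    (hw : ∀ r, 0 < r → |w r| ≤ M * (1 + 1 / r)) :
    Tendsto (hamiltonian m κ b w) atTop (𝓝 0) := by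
  have hbound : Tendsto (fun r : ℝ ↦ M * (1 + 1 / r) * sincTransform m κ b r ^ 2) atTop (𝓝 0) := by
    have hinv : Tendsto (fun r : ℝ ↦ 1 / r) atTop (𝓝 0) := tendsto_const_nhds.div_atTop tendsto_id
    simpa using ((hinv.const_add 1).const_mul M).mul (h.tendsto_sincTransform_atTop.pow 2)
  rw [← add_zero (0 : ℝ)]
  refine h.tendsto_kineticForm_atTop.add (squeeze_zero_norm' ?_ hbound)
  filter_upwards [eventually_gt_atTop 0] with r hr
  rw [norm_mul, Real.norm_of_nonneg (sq_nonneg _)]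
  exact mul_le_mul_of_nonneg_right (hw r hr) (sq_nonneg _)

theorem tendsto_hamiltonian_zero (h : IsSpectralDensity m κ b) {M : ℝ}
    (hw : ∀ r, 0 < r → |w r| ≤ M * (1 + 1 / r)) (hb0 : ∫ ω, b ω ∂m = 0) :
    Tendsto (hamiltonian m κ b w) (𝓝[>] 0) (𝓝 (-laplaceForm m κ b)) := by
  set C := ∫ ω, |κ ω * b ω| ∂m
  have hbound : Tendsto (fun r : ℝ ↦ M * C ^ 2 * (r ^ 2 + r)) (𝓝[>] 0) (𝓝 0) := by
    have hcont : Continuous fun r : ℝ ↦ M * C ^ 2 * (r ^ 2 + r) := by fun_prop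
    exact (hcont.tendsto' 0 0 (by simp)).mono_left nhdsWithin_le_nhds
  rw [← add_zero (-laplaceForm m κ b)]
  refine h.tendsto_kineticForm_zero.add (squeeze_zero_norm' ?_ hbound)
  filter_upwards [self_mem_nhdsWithin] with r hr
  have hr : 0 < r := hr
  calc ‖w r * sincTransform m κ b r ^ 2‖ = |w r| * |sincTransform m κ b r| ^ 2 := by
        rw [norm_mul, norm_pow, Real.norm_eq_abs, Real.norm_eq_abs]
    _ ≤ M * (1 + 1 / r) * (C * r) ^ 2 :=
        mul_le_mul (hw r hr) (pow_le_pow_left₀ (abs_nonneg _) (h.abs_sincTransform_le hb0 hr) 2)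
          (by positivity) ((abs_nonneg _).trans (hw r hr))
    _ = M * C ^ 2 * (r ^ 2 + r) := by field_simp

theorem antitoneOn_hamiltonian [SFinite m] (h : IsSpectralDensity m κ b)
    (hw : ∀ r, 0 < r → HasDerivAt w (w' r) r) (hw' : ∀ r, 0 < r → w' r ≤ 0)
    (heq : ∀ r, 0 < r → sincTransform m κ (fun ω ↦ κ ω * b ω) r = w r * sincTransform m κ b r) :
    AntitoneOn (hamiltonian m κ b w) (Set.Ioi 0) := by
  have hE (s : ℝ) (hs : 0 < s) := h.hasDerivAt_hamiltonian hs (hw s hs) (heq s hs)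
  refine antitoneOn_of_deriv_nonpos (convex_Ioi 0)
    (fun s hs ↦ (hE s hs).continuousAt.continuousWithinAt)
    (fun s hs ↦ (hE s (interior_subset hs)).differentiableAt.differentiableWithinAt) fun s hs ↦ ?_
  have hs : 0 < s := interior_subset hs
  rw [(hE s hs).deriv, sub_nonpos]
  exact (mul_nonpos_of_nonpos_of_nonneg (hw' s hs) (sq_nonneg _)).trans
    (mul_nonneg (div_pos four_pos hs).le (h.mul_sincDeriv hs).laplaceForm_nonneg)

/-- The Hamiltonian decreases, but from `-laplaceForm m κ b ≤ 0` to `0`. -/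
theorem hamiltonian_eq_zero [SFinite m] (h : IsSpectralDensity m κ b) {M : ℝ}
    (hM : ∀ r, 0 < r → |w r| ≤ M * (1 + 1 / r)) (hb0 : ∫ ω, b ω ∂m = 0)
    (hanti : AntitoneOn (hamiltonian m κ b w) (Set.Ioi 0)) (hr : 0 < r) :
    hamiltonian m κ b w r = 0 := by
  refine le_antisymm ?_ ?_
  · refine (ge_of_tendsto (h.tendsto_hamiltonian_zero hM hb0) ?_).trans
      (neg_nonpos.2 h.laplaceForm_nonneg)
    filter_upwards [Ioo_mem_nhdsGT hr] with u hu using hanti hu.1 hr hu.2.le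
  · refine le_of_tendsto (h.tendsto_hamiltonian_atTop hM) ?_
    filter_upwards [eventually_ge_atTop r] with u hu using hanti hr (hr.trans_le hu) hu

theorem sincTransformDeriv_eq_zero [SFinite m] (h : IsSpectralDensity m κ b)
    (hE : ∀ r, 0 < r → hamiltonian m κ b w r = 0) {w₁ : ℝ} (hr : 0 < r)
    (hw : HasDerivAt w w₁ r) (hw₁ : w₁ ≤ 0)
    (heq : sincTransform m κ (fun ω ↦ κ ω * b ω) r = w r * sincTransform m κ b r) :
    sincTransformDeriv m κ b r = 0 := by
  have hconst : HasDerivAt (hamiltonian m κ b w) 0 r :=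
    (hasDerivAt_const r 0).congr_of_eventuallyEq (eventually_of_mem (Ioi_mem_nhds hr) hE)
  have hpotential : w₁ * sincTransform m κ b r ^ 2 ≤ 0 :=
    mul_nonpos_of_nonpos_of_nonneg hw₁ (sq_nonneg _)
  have hfriction : 0 ≤ 4 / r * laplaceForm m κ (fun ω ↦ b ω * sincDeriv (κ ω * r)) :=
    mul_nonneg (div_pos four_pos hr).le (h.mul_sincDeriv hr).laplaceForm_nonneg
  have hzero : 4 / r * laplaceForm m κ (fun ω ↦ b ω * sincDeriv (κ ω * r)) = 0 := by
    linarith [hconst.unique (h.hasDerivAt_hamiltonian hr hw heq)]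
  exact (h.mul_sincDeriv hr).integral_eq_zero_of_laplaceForm_eq_zero
    ((mul_eq_zero.1 hzero).resolve_left (div_pos four_pos hr).ne')

theorem sincTransform_eq_zero [SFinite m] (h : IsSpectralDensity m κ b) {M : ℝ}
    (hM : ∀ r, 0 < r → |w r| ≤ M * (1 + 1 / r)) (hw : ∀ r, 0 < r → HasDerivAt w (w' r) r)
    (hw' : ∀ r, 0 < r → w' r ≤ 0) (hb0 : ∫ ω, b ω ∂m = 0)
    (heq : ∀ r, 0 < r → sincTransform m κ (fun ω ↦ κ ω * b ω) r = w r * sincTransform m κ b r)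
    (hr : 0 < r) : sincTransform m κ b r = 0 := by
  have hE (s : ℝ) (hs : 0 < s) :=
    h.hamiltonian_eq_zero hM hb0 (h.antitoneOn_hamiltonian hw hw' heq) hs
  refine tendsto_nhds_unique (tendsto_const_nhds.congr' ?_) h.tendsto_sincTransform_atTop
  filter_upwards [eventually_gt_atTop 0] with s hs
  refine isOpen_Ioi.is_const_of_deriv_eq_zero isPreconnected_Ioi
    (fun u hu ↦ (h.hasDerivAt_sincTransform hu).differentiableAt.differentiableWithinAt)
    (fun u hu ↦ ?_) hr hs
  rw [(h.hasDerivAt_sincTransform hu).deriv,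
    h.sincTransformDeriv_eq_zero hE hu (hw u hu) (hw' u hu) (heq u hu), Pi.zero_apply]

end IsSpectralDensity

end Hamiltonian

section RotationInvariance

theorem lintegral_sqrt_sq_add_sq {g : ℝ → ℝ≥0∞} (hg : Measurable g) :
    ∫⁻ q : ℝ × ℝ, g √(q.1 ^ 2 + q.2 ^ 2) =
      ENNReal.ofReal (2 * π) * ∫⁻ σ in Set.Ioi 0, ENNReal.ofReal σ * g σ := by
  have hπ : volume (Set.Ioo (-π) π) = ENNReal.ofReal (2 * π) := by
    rw [Real.volume_Ioo, sub_neg_eq_add, two_mul]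
  rw [← lintegral_comp_polarCoord_symm, polarCoord_target, Measure.volume_eq_prod,
    ← Measure.prod_restrict, ← hπ]
  have hpolar : ∀ᵐ p ∂(volume.restrict (Set.Ioi (0 : ℝ))).prod (volume.restrict (Set.Ioo (-π) π)),
      ENNReal.ofReal p.1 • g √((polarCoord.symm p).1 ^ 2 + (polarCoord.symm p).2 ^ 2) =
        ENNReal.ofReal p.1 * g p.1 := by
    filter_upwards [Measure.quasiMeasurePreserving_fst.ae (ae_restrict_mem measurableSet_Ioi)]
      with p hp
    have hsq : (p.1 * Real.cos p.2) ^ 2 + (p.1 * Real.sin p.2) ^ 2 = p.1 ^ 2 := by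
      linear_combination p.1 ^ 2 * Real.sin_sq_add_cos_sq p.2
    rw [polarCoord_symm_apply, hsq, Real.sqrt_sq (le_of_lt hp), smul_eq_mul]
  rw [lintegral_congr_ae hpolar, lintegral_prod _ (by fun_prop)]
  simp_rw [lintegral_const, Measure.restrict_apply_univ]
  rw [lintegral_mul_const _ (by fun_prop), mul_comm]

theorem image_sqrt_sq_add_sq_Ioi (u : ℝ) :
    (fun σ ↦ √(u ^ 2 + σ ^ 2)) '' Set.Ioi 0 = Set.Ioi |u| := by
  ext s
  constructor
  · rintro ⟨σ, hσ, rfl⟩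
    have hσ : 0 < σ := hσ
    exact Real.lt_sqrt_of_sq_lt (by rw [sq_abs]; exact lt_add_of_pos_right _ (by positivity))
  · intro hs
    have hus : u ^ 2 < s ^ 2 :=
      sq_lt_sq' (by linarith [neg_abs_le u, hs.out]) ((le_abs_self u).trans_lt hs)
    refine ⟨√(s ^ 2 - u ^ 2), Real.sqrt_pos.2 (sub_pos.2 hus), ?_⟩
    simp only [Real.sq_sqrt (sub_pos.2 hus).le, add_sub_cancel]
    exact Real.sqrt_sq ((abs_nonneg u).trans hs.out.le)

theorem lintegral_Ioi_comp_sqrt_sq_add_sq (u : ℝ) (g : ℝ → ℝ≥0∞) :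
    ∫⁻ σ in Set.Ioi 0, ENNReal.ofReal σ * g √(u ^ 2 + σ ^ 2) =
      ∫⁻ s in Set.Ioi |u|, ENNReal.ofReal s * g s := by
  have hsq {σ : ℝ} (hσ : 0 < σ) : 0 < u ^ 2 + σ ^ 2 := by positivity
  rw [← image_sqrt_sq_add_sq_Ioi, lintegral_image_eq_lintegral_abs_deriv_mul measurableSet_Ioi
    (f' := fun σ ↦ σ / √(u ^ 2 + σ ^ 2))]
  · refine setLIntegral_congr_fun measurableSet_Ioi fun σ hσ ↦ ?_
    have hσ : 0 < σ := hσ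
    have hsqrt := Real.sqrt_pos.2 (hsq hσ)
    rw [abs_of_pos (div_pos hσ hsqrt), ← mul_assoc, ← ENNReal.ofReal_mul (div_pos hσ hsqrt).le,
      div_mul_cancel₀ _ hsqrt.ne']
  · intro σ hσ
    have hd := (((hasDerivAt_pow 2 σ).const_add (u ^ 2)).sqrt (hsq hσ).ne').hasDerivWithinAt
      (s := Set.Ioi 0)
    exact hd.congr_deriv (by field_simp; simp)
  · intro σ hσ τ hτ h
    rw [Real.sqrt_inj (hsq hσ).le (hsq hτ).le, add_right_inj] at h
    exact (sq_eq_sq₀ (le_of_lt hσ) (le_of_lt hτ)).1 h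

theorem measurePreserving_toLp_prod :
    MeasurePreserving (fun p : ℝ × ℝ × ℝ ↦ (!₂[p.1, p.2.1, p.2.2] : Rd)) := by
  have h := (PiLp.volume_preserving_toLp (Fin 3)).comp
    ((volume_preserving_piFinSuccAbove (fun _ : Fin 3 ↦ ℝ) 0).symm.comp
      ((MeasurePreserving.id (volume : Measure ℝ)).prod (volume_preserving_finTwoArrow ℝ).symm))
  convert! h using 1
  ext p i
  fin_cases i <;> simp [MeasurableEquiv.piFinSuccAbove, MeasurableEquiv.finTwoArrow]

theorem lintegral_lintegral_Ioi_abs {K : ℝ × ℝ → ℝ≥0∞} (hK : Measurable K) :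
    ∫⁻ u, ∫⁻ s in Set.Ioi |u|, K (s, u) =
      ∫⁻ s in Set.Ioi 0, ∫⁻ u in Set.Ioo (-s) s, K (s, u) := by
  set T : Set (ℝ × ℝ) := {p | |p.2| < p.1}
  have hT : MeasurableSet T := measurableSet_lt (by fun_prop) (by fun_prop)
  have hrow (u : ℝ) : ∫⁻ s in Set.Ioi |u|, K (s, u) = ∫⁻ s, T.indicator K (s, u) :=
    (lintegral_indicator measurableSet_Ioi _).symm
  have hcol (s : ℝ) : ∫⁻ u, T.indicator K (s, u) = ∫⁻ u in Set.Ioo (-s) s, K (s, u) := by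
    rw [← lintegral_indicator measurableSet_Ioo]
    refine lintegral_congr fun u ↦ ?_
    have hmem : (s, u) ∈ T ↔ u ∈ Set.Ioo (-s) s := (abs_lt : |u| < s ↔ _)
    by_cases hu : u ∈ Set.Ioo (-s) s
    · rw [Set.indicator_of_mem hu, Set.indicator_of_mem (hmem.2 hu)]
    · rw [Set.indicator_of_notMem hu, Set.indicator_of_notMem (mt hmem.1 hu)]
  simp_rw [hrow]
  rw [lintegral_lintegral_swap (f := fun u s ↦ T.indicator K (s, u))
    ((hK.indicator hT).comp measurable_swap).aemeasurable]
  simp_rw [hcol]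
  refine (setLIntegral_eq_of_support_subset (Function.support_subset_iff'.2 fun s hs ↦ ?_)).symm
  rw [Set.mem_Ioi, not_lt] at hs
  rw [Set.Ioo_eq_empty (by linarith), Measure.restrict_empty, lintegral_zero_measure]

theorem lintegral_norm_coord {H : ℝ × ℝ → ℝ≥0∞} (hH : Measurable H) :
    ∫⁻ y : Rd, H (‖y‖, y 0) = ENNReal.ofReal (2 * π) *
      ∫⁻ s in Set.Ioi 0, ENNReal.ofReal s * ∫⁻ u in Set.Ioo (-s) s, H (s, u) := by
  have hnorm (p : ℝ × ℝ × ℝ) :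
      ‖(!₂[p.1, p.2.1, p.2.2] : Rd)‖ = √(p.1 ^ 2 + √(p.2.1 ^ 2 + p.2.2 ^ 2) ^ 2) := by
    rw [Real.sq_sqrt (by positivity), EuclideanSpace.norm_eq, Fin.sum_univ_three]
    simp [add_assoc]
  calc ∫⁻ y : Rd, H (‖y‖, y 0)
      = ∫⁻ p : ℝ × ℝ × ℝ, H (√(p.1 ^ 2 + √(p.2.1 ^ 2 + p.2.2 ^ 2) ^ 2), p.1) := by
        rw [← measurePreserving_toLp_prod.lintegral_comp (by fun_prop)]
        simp only [hnorm, Matrix.cons_val_zero]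
    _ = ∫⁻ u : ℝ, ∫⁻ q : ℝ × ℝ, H (√(u ^ 2 + √(q.1 ^ 2 + q.2 ^ 2) ^ 2), u) := by
        rw [Measure.volume_eq_prod, lintegral_prod _ (by fun_prop)]
    _ = ∫⁻ u : ℝ, ENNReal.ofReal (2 * π) * ∫⁻ s in Set.Ioi |u|, ENNReal.ofReal s * H (s, u) := by
        refine lintegral_congr fun u ↦ ?_
        rw [lintegral_sqrt_sq_add_sq (g := fun σ ↦ H (√(u ^ 2 + σ ^ 2), u)) (by fun_prop),
          lintegral_Ioi_comp_sqrt_sq_add_sq u fun s ↦ H (s, u)]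
    _ = ENNReal.ofReal (2 * π) * ∫⁻ u : ℝ, ∫⁻ s in Set.Ioi |u|, ENNReal.ofReal s * H (s, u) :=
        lintegral_const_mul' _ _ ENNReal.ofReal_ne_top
    _ = _ := by
        rw [lintegral_lintegral_Ioi_abs (K := fun p ↦ ENNReal.ofReal p.1 * H p) (by fun_prop)]
        simp only [lintegral_const_mul' _ _ ENNReal.ofReal_ne_top]

/-- The uniform probability measure on `[-1, 1]`, which by Archimedes' hat-box theorem is the law of
the cosine of the polar angle of a uniformly distributed direction in `ℝ³`. -/
def cosineLaw : Measure ℝ := ENNReal.ofReal (1 / 2) • volume.restrict (Set.Ioo (-1) 1)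

instance : IsProbabilityMeasure cosineLaw where
  measure_univ := by
    rw [cosineLaw, Measure.smul_apply, Measure.restrict_apply_univ, Real.volume_Ioo, smul_eq_mul,
      ← ENNReal.ofReal_mul one_half_pos.le]
    norm_num

theorem lintegral_Ioo_eq_lintegral_cosineLaw {s : ℝ} (hs : 0 < s) (f : ℝ → ℝ≥0∞) :
    ∫⁻ u in Set.Ioo (-s) s, f u = ENNReal.ofReal (2 * s) * ∫⁻ τ, f (s * τ) ∂cosineLaw := by
  have himage : Set.Ioo (-s) s = (s * ·) '' Set.Ioo (-1) 1 := by
    rw [Set.image_mul_left_Ioo hs, mul_neg_one, mul_one]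
  have hderiv (τ : ℝ) (_ : τ ∈ Set.Ioo (-1) 1) :
      HasDerivWithinAt (s * ·) s (Set.Ioo (-1) 1) τ := by
    simpa using ((hasDerivAt_id τ).const_mul s).hasDerivWithinAt
  rw [himage, lintegral_image_eq_lintegral_abs_deriv_mul measurableSet_Ioo hderiv
    (mul_right_injective₀ hs.ne').injOn, abs_of_pos hs, lintegral_const_mul' _ _
    ENNReal.ofReal_ne_top, cosineLaw, lintegral_smul_measure, smul_eq_mul, ← mul_assoc,
    ← ENNReal.ofReal_mul (by positivity)]
  ring_nf

theorem lintegral_norm_coord_eq_cosineLaw {H : ℝ × ℝ → ℝ≥0∞} (hH : Measurable H) :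
    ∫⁻ y : Rd, H (‖y‖, y 0) = ∫⁻ y : Rd, ∫⁻ τ, H (‖y‖, ‖y‖ * τ) ∂cosineLaw := by
  have hmean : Measurable fun p : ℝ × ℝ ↦ ∫⁻ τ, H (p.1, p.1 * τ) ∂cosineLaw :=
    Measurable.lintegral_prod_right' (f := fun q : (ℝ × ℝ) × ℝ ↦ H (q.1.1, q.1.1 * q.2))
      (by fun_prop)
  rw [lintegral_norm_coord hH, lintegral_norm_coord hmean]
  congr 1
  refine setLIntegral_congr_fun measurableSet_Ioi fun s hs ↦ ?_
  rw [lintegral_Ioo_eq_lintegral_cosineLaw hs]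
  dsimp only
  rw [setLIntegral_const, Real.volume_Ioo,
    sub_neg_eq_add, ← two_mul, mul_comm (ENNReal.ofReal (2 * s))]

theorem identDistrib_norm_inner (x : Rd) :
    ProbabilityTheory.IdentDistrib (fun y : Rd ↦ (‖y‖, inner ℝ x y))
      (fun p : Rd × ℝ ↦ (‖p.1‖, ‖x‖ * ‖p.1‖ * p.2)) volume (volume.prod cosineLaw) where
  aemeasurable_fst := by fun_prop
  aemeasurable_snd := by fun_prop
  map_eq := by
    refine Measure.ext_of_lintegral _ fun H hH ↦ ?_
    rw [lintegral_map hH (by fun_prop), lintegral_map hH (by fun_prop),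
      lintegral_prod _ (by fun_prop)]
    set e : Rd := EuclideanSpace.single 0 ‖x‖
    have he : ‖x‖ = ‖e‖ := by rw [PiLp.norm_single, norm_norm]
    let A := (ℝ ∙ (x - e))ᗮ.reflection
    have hA : A x = e := Submodule.reflection_sub he
    have hinner (y : Rd) : inner ℝ x y = ‖x‖ * A y 0 := by
      rw [← A.inner_map_map, hA, EuclideanSpace.inner_single_left]
      simp
    calc ∫⁻ y, H (‖y‖, inner ℝ x y) = ∫⁻ y, H (‖A y‖, ‖x‖ * A y 0) := by
          simp_rw [hinner, A.norm_map]
      _ = ∫⁻ y : Rd, H (‖y‖, ‖x‖ * y 0) :=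
          A.measurePreserving.lintegral_comp (f := fun y : Rd ↦ H (‖y‖, ‖x‖ * y 0)) (by fun_prop)
      _ = ∫⁻ y : Rd, ∫⁻ τ, H (‖y‖, ‖x‖ * ‖y‖ * τ) ∂cosineLaw := by
          rw [lintegral_norm_coord_eq_cosineLaw (H := fun p ↦ H (p.1, ‖x‖ * p.2)) (by fun_prop)]
          simp_rw [mul_assoc]

end RotationInvariance

section Newton

theorem integral_cosineLaw {E : Type*} [NormedAddCommGroup E] [NormedSpace ℝ E] (f : ℝ → E) :
    ∫ τ, f τ ∂cosineLaw = (1 / 2 : ℝ) • ∫ τ in (-1)..1, f τ := by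
  rw [cosineLaw, integral_smul_measure, ENNReal.toReal_ofReal one_half_pos.le,
    intervalIntegral.integral_of_le (by norm_num), integral_Ioc_eq_integral_Ioo]

theorem sq_sub_le_sq_add_sq_sub_mul {r s τ : ℝ} (hr : 0 < r) (hs : 0 < s) (hτ : τ ≤ 1) :
    (r - s) ^ 2 ≤ r ^ 2 + s ^ 2 - 2 * (r * s * τ) := by
  nlinarith [mul_nonneg (mul_pos hr hs).le (sub_nonneg.2 hτ)]

theorem integral_inv_sqrt_cosineLaw {r s : ℝ} (hr : 0 < r) (hs : 0 < s) (hrs : r ≠ s) :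
    ∫ τ, (√(r ^ 2 + s ^ 2 - 2 * (r * s * τ)))⁻¹ ∂cosineLaw = (max r s)⁻¹ := by
  have hpos {τ : ℝ} (hτ : τ ∈ Set.uIcc (-1 : ℝ) 1) : 0 < r ^ 2 + s ^ 2 - 2 * (r * s * τ) := by
    rw [Set.uIcc_of_le (by norm_num)] at hτ
    exact (sq_pos_of_ne_zero (sub_ne_zero.2 hrs)).trans_le (sq_sub_le_sq_add_sq_sub_mul hr hs hτ.2)
  have hderiv (τ : ℝ) (hτ : τ ∈ Set.uIcc (-1 : ℝ) 1) :
      HasDerivAt (fun τ ↦ -√(r ^ 2 + s ^ 2 - 2 * (r * s * τ)) / (r * s))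
        (√(r ^ 2 + s ^ 2 - 2 * (r * s * τ)))⁻¹ τ := by
    have h := (((((hasDerivAt_id τ).const_mul (r * s)).const_mul 2).const_sub
      (r ^ 2 + s ^ 2)).sqrt (hpos hτ).ne').neg.div_const (r * s)
    refine h.congr_deriv ?_
    have := Real.sqrt_pos.2 (hpos hτ)
    simp only [id]
    field_simp
  have hcont : ContinuousOn (fun τ ↦ (√(r ^ 2 + s ^ 2 - 2 * (r * s * τ)))⁻¹) (Set.uIcc (-1) 1) :=
    ContinuousOn.inv₀ (by fun_prop) fun τ hτ ↦ (Real.sqrt_pos.2 (hpos hτ)).ne'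
  have hsub : r ^ 2 + s ^ 2 - 2 * (r * s * 1) = (r - s) ^ 2 := by ring
  have hadd : r ^ 2 + s ^ 2 - 2 * (r * s * (-1)) = (r + s) ^ 2 := by ring
  rw [integral_cosineLaw, intervalIntegral.integral_eq_sub_of_hasDerivAt hderiv
    hcont.intervalIntegrable, hsub, hadd, Real.sqrt_sq_eq_abs, Real.sqrt_sq (add_pos hr hs).le,
    smul_eq_mul]
  rcases hrs.lt_or_gt with h | h
  · rw [abs_of_neg (sub_neg.2 h), max_eq_right h.le]
    field_simp
    ring
  · rw [abs_of_pos (sub_pos.2 h), max_eq_left h.le]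
    field_simp
    ring

theorem lintegral_inv_sqrt_cosineLaw {r s : ℝ} (hr : 0 < r) (hs : 0 < s) (hrs : r ≠ s) :
    ∫⁻ τ, ENNReal.ofReal (√(r ^ 2 + s ^ 2 - 2 * (r * s * τ)))⁻¹ ∂cosineLaw =
      ENNReal.ofReal (max r s)⁻¹ := by
  rw [← integral_inv_sqrt_cosineLaw hr hs hrs, ofReal_integral_eq_lintegral_ofReal _
    (ae_of_all _ fun τ ↦ inv_nonneg.2 (Real.sqrt_nonneg _))]
  refine Integrable.of_integral_ne_zero ?_
  rw [integral_inv_sqrt_cosineLaw hr hs hrs]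
  exact (inv_pos.2 (hr.trans_le (le_max_left r s))).ne'

theorem ae_norm_ne (r : ℝ) : ∀ᵐ y : Rd, ‖y‖ ≠ r := by
  filter_upwards [measure_eq_zero_iff_ae_notMem.1 (Measure.addHaar_sphere volume (0 : Rd) r)]
    with y hy h using hy (mem_sphere_zero_iff_norm.2 h)

theorem lintegral_div_norm_sub {g : ℝ → ℝ} (hg : Measurable g) {x : Rd} (hx : x ≠ 0) :
    ∫⁻ y, ENNReal.ofReal (g ‖y‖ / ‖x - y‖) = ∫⁻ y : Rd, ENNReal.ofReal (g ‖y‖ / max ‖x‖ ‖y‖) := by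
  have hnorm (y : Rd) : ‖x - y‖ = √(‖x‖ ^ 2 + ‖y‖ ^ 2 - 2 * inner ℝ x y) := by
    rw [← Real.sqrt_sq (norm_nonneg (x - y)), norm_sub_sq_real]
    ring_nf
  simp_rw [hnorm]
  have hlaw := ((identDistrib_norm_inner x).comp (u := fun p : ℝ × ℝ ↦
    ENNReal.ofReal (g p.1 / √(‖x‖ ^ 2 + p.1 ^ 2 - 2 * p.2))) (by fun_prop)).lintegral_eq
  refine hlaw.trans ?_
  rw [lintegral_prod _ (by fun_prop)]
  refine lintegral_congr_ae ?_
  filter_upwards [ae_norm_ne 0, ae_norm_ne ‖x‖] with y hy₀ hyx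
  have hy : 0 < ‖y‖ := (norm_nonneg y).lt_of_ne' hy₀
  simp only [Function.comp_apply, div_eq_mul_inv,
    ENNReal.ofReal_mul' (inv_nonneg.2 (Real.sqrt_nonneg _)),
    ENNReal.ofReal_mul' (inv_nonneg.2 (le_max_of_le_right (norm_nonneg _)))]
  rw [lintegral_const_mul' _ _ ENNReal.ofReal_ne_top,
    lintegral_inv_sqrt_cosineLaw (norm_pos_iff.2 hx) hy hyx.symm]

theorem exists_stronglyMeasurable_comp_norm {E F : Type*} [NormedAddCommGroup E] [NormedSpace ℝ E]
    [FiniteDimensional ℝ E] [Nontrivial E] [MeasurableSpace E] [BorelSpace E] {μ : Measure E}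
    [μ.IsAddHaarMeasure] [TopologicalSpace F] {f : E → F}
    (hf : ∀ x y, ‖x‖ = ‖y‖ → f x = f y) (hm : AEStronglyMeasurable f μ) :
    ∃ g : ℝ → F, StronglyMeasurable g ∧ f =ᵐ[μ] fun x ↦ g ‖x‖ := by
  obtain ⟨e, he⟩ := exists_norm_eq E zero_le_one
  set h := homeomorphUnitSphereProd E
  have hpres := μ.measurePreserving_homeomorphUnitSphereProd
  have hsub : MeasurableSet ({0}ᶜ : Set E) := (measurableSet_singleton 0).compl
  have hprofile : AEStronglyMeasurable (fun r : Set.Ioi (0 : ℝ) ↦ f (r.1 • e))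
      (.volumeIoiPow (Module.finrank ℝ E - 1)) := by
    refine AEStronglyMeasurable.of_comp_snd ?_ μ.toSphere_ne_zero
    have hcoe : AEStronglyMeasurable (fun z : ({0}ᶜ : Set E) ↦ f z) (μ.comap (↑)) := by
      refine hm.comp_quasiMeasurePreserving ⟨measurable_subtype_coe, ?_⟩
      rw [map_comap_subtype_coe hsub]
      exact Measure.restrict_le_self.absolutelyContinuous
    refine (hcoe.comp_measurePreserving (hpres.symm h.toMeasurableEquiv)).congr
      (ae_of_all _ fun p ↦ hf _ _ ?_)
    have hp : 0 < p.2.1 := p.2.2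
    simp [norm_smul, he, h, abs_of_pos hp]
  obtain ⟨g, hg, hgf⟩ := hprofile
  obtain ⟨g', hg', rfl⟩ := (MeasurableEmbedding.subtype_coe
    (measurableSet_Ioi (a := (0 : ℝ)))).exists_stronglyMeasurable_extend hg fun _ ↦ ⟨f 0⟩
  refine ⟨g', hg', ?_⟩
  have hae : ∀ᵐ z : ({0}ᶜ : Set E) ∂μ.comap (↑), f z = g' ‖z.1‖ := by
    filter_upwards [hpres.quasiMeasurePreserving.ae
      (Measure.quasiMeasurePreserving_snd.ae hgf)] with z hz
    rw [hf z (‖z.1‖ • e) (by simp [norm_smul, he])]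
    simpa using hz
  rw [← ae_restrict_iff_subtype hsub (p := fun x ↦ f x = g' ‖x‖)] at hae
  rwa [restrict_compl_singleton] at hae

/-- The radial profile of the Newtonian potential of a radial density `ρ`; by Newton's theorem, the
mass outside the ball of radius `r` contributes a constant potential. -/
def radialPotential (ρ : Rd → ℝ) (r : ℝ) : ℝ := ∫ y, ρ y / max r ‖y‖

theorem newton_eq_radialPotential {ρ : Rd → ℝ} (hρ : ∀ x y, ‖x‖ = ‖y‖ → ρ x = ρ y)
    (hm : AEStronglyMeasurable ρ) (h0 : ∀ y, 0 ≤ ρ y) {x : Rd} (hx : x ≠ 0) :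
    newton (fun y ↦ (ρ y : ℂ)) x = radialPotential ρ ‖x‖ := by
  obtain ⟨g, hg, hgρ⟩ := exists_stronglyMeasurable_comp_norm hρ hm
  have hcast : newton (fun y ↦ (ρ y : ℂ)) x = ((∫ y, ρ y / ‖x - y‖ : ℝ) : ℂ) := by
    simp only [newton, ← Complex.ofReal_div, integral_complex_ofReal]
  have hm := hm.aemeasurable
  rw [hcast, radialPotential, integral_eq_lintegral_of_nonneg_ae
    (ae_of_all _ fun y ↦ div_nonneg (h0 y) (norm_nonneg _))
    (hm.div (by fun_prop)).aestronglyMeasurable, integral_eq_lintegral_of_nonneg_ae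
    (ae_of_all _ fun y ↦ div_nonneg (h0 y) (le_max_of_le_right (norm_nonneg _)))
    (hm.div (by fun_prop)).aestronglyMeasurable]
  congr 2
  calc ∫⁻ y, ENNReal.ofReal (ρ y / ‖x - y‖) = ∫⁻ y, ENNReal.ofReal (g ‖y‖ / ‖x - y‖) :=
        lintegral_congr_ae (by filter_upwards [hgρ] with y hy; rw [hy])
    _ = ∫⁻ y : Rd, ENNReal.ofReal (g ‖y‖ / max ‖x‖ ‖y‖) :=
        lintegral_div_norm_sub hg.measurable hx
    _ = ∫⁻ y, ENNReal.ofReal (ρ y / max ‖x‖ ‖y‖) :=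
        lintegral_congr_ae (by filter_upwards [hgρ] with y hy; rw [hy])

end Newton

section RadialPotential

variable {ρ : Rd → ℝ} {r s : ℝ}

theorem integrable_div_max (hρ : Integrable ρ) (hr : 0 < r) :
    Integrable fun y ↦ ρ y / max r ‖y‖ := by
  simp_rw [div_eq_mul_inv]
  refine hρ.mul_bdd (c := r⁻¹) (by fun_prop) (ae_of_all _ fun y ↦ ?_)
  rw [Real.norm_of_nonneg (inv_nonneg.2 (hr.le.trans (le_max_left _ _)))]
  exact inv_anti₀ hr (le_max_left _ _)

theorem abs_radialPotential_le (hρ : Integrable ρ) (hr : 0 < r) :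
    |radialPotential ρ r| ≤ (∫ y, |ρ y|) / r := by
  rw [← integral_div r fun y ↦ |ρ y|]
  refine norm_integral_le_of_norm_le (f := fun y ↦ ρ y / max r ‖y‖) (hρ.abs.div_const r)
    (ae_of_all _ fun y ↦ ?_)
  rw [norm_div, Real.norm_of_nonneg (hr.le.trans (le_max_left r ‖y‖)), Real.norm_eq_abs]
  exact div_le_div_of_nonneg_left (abs_nonneg _) hr (le_max_left _ _)

theorem abs_radialPotential_sub_one_le (hρ : Integrable ρ) (hr : 0 < r) :
    |radialPotential ρ r - 1| ≤ (1 + ∫ y, |ρ y|) * (1 + 1 / r) := by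
  have hI : 0 ≤ ∫ y, |ρ y| := integral_nonneg fun y ↦ abs_nonneg _
  have hr' : 0 < 1 / r := one_div_pos.2 hr
  calc |radialPotential ρ r - 1|
    _ ≤ |radialPotential ρ r| + |1| := abs_sub _ _
    _ ≤ (∫ y, |ρ y|) * (1 / r) + 1 := by
      rw [abs_one, ← div_eq_mul_one_div]
      exact add_le_add_left (abs_radialPotential_le hρ hr) 1
    _ ≤ (1 + ∫ y, |ρ y|) * (1 + 1 / r) := by nlinarith

theorem abs_inv_max_sub_inv_max_le {a b c d : ℝ} (ha : 0 < a) (hb : a ≤ b) (hc : a ≤ c) :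
    |(max b d)⁻¹ - (max c d)⁻¹| ≤ (a ^ 2)⁻¹ * |b - c| := by
  have hb' : a ≤ max b d := hb.trans (le_max_left _ _)
  have hc' : a ≤ max c d := hc.trans (le_max_left _ _)
  rw [inv_sub_inv (ha.trans_le hb').ne' (ha.trans_le hc').ne', abs_div, div_eq_inv_mul,
    abs_of_pos (mul_pos (ha.trans_le hb') (ha.trans_le hc'))]
  refine mul_le_mul (inv_anti₀ (pow_pos ha 2) ?_) ?_ (abs_nonneg _) (by positivity)
  · rw [sq]
    exact mul_le_mul hb' hc' ha.le (ha.le.trans hb')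
  · rw [abs_sub_comm]
    simpa using abs_max_sub_max_le_max b d c d

theorem hasDerivAt_div_max {a d : ℝ} (hr : 0 < r) (hd : d ≠ r) :
    HasDerivAt (fun s ↦ a / max s d) (if d < r then -a / r ^ 2 else 0) r := by
  rcases hd.lt_or_gt with hd | hd
  · rw [if_pos hd]
    have h := (hasDerivAt_inv hr.ne').const_mul a
    refine (h.congr_of_eventuallyEq ?_).congr_deriv (by ring)
    filter_upwards [Ioi_mem_nhds hd] with s hs
    rw [max_eq_left (le_of_lt hs), div_eq_mul_inv]
  · rw [if_neg hd.not_gt]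
    refine (hasDerivAt_const r (a / d)).congr_of_eventuallyEq ?_
    filter_upwards [Iio_mem_nhds hd] with s hs
    rw [max_eq_right (le_of_lt hs)]

theorem hasDerivAt_radialPotential (hρ : Integrable ρ) (hr : 0 < r) :
    HasDerivAt (radialPotential ρ) (∫ y, if ‖y‖ < r then -ρ y / r ^ 2 else 0) r := by
  refine (hasDerivAt_integral_of_dominated_loc_of_lip
    (bound := fun y ↦ |ρ y| * ((r / 2) ^ 2)⁻¹) (Ioi_mem_nhds (half_lt_self hr)) ?_
    (integrable_div_max hρ hr) ?_ (ae_of_all _ fun y ↦ ?_) (hρ.abs.mul_const _) ?_).2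
  · filter_upwards [Ioi_mem_nhds hr] with s hs using (integrable_div_max hρ hs).aestronglyMeasurable
  · have := hρ.aemeasurable
    exact ((hρ.neg.div_const (r ^ 2)).aestronglyMeasurable.indicator
      (measurableSet_lt measurable_norm measurable_const)).congr (ae_of_all _ fun _ ↦ rfl)
  · refine LipschitzOnWith.of_dist_le_mul fun s hs u hu ↦ ?_
    rw [Real.dist_eq, Real.dist_eq, div_eq_mul_inv, div_eq_mul_inv, ← mul_sub, abs_mul,
      Real.coe_nnabs, abs_mul, abs_abs, abs_of_nonneg (a := ((r / 2) ^ 2)⁻¹) (by positivity),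
      mul_assoc]
    exact mul_le_mul_of_nonneg_left (abs_inv_max_sub_inv_max_le (half_pos hr) (le_of_lt hs)
      (le_of_lt hu)) (abs_nonneg _)
  · filter_upwards [ae_norm_ne r] with y hy using hasDerivAt_div_max hr hy

theorem deriv_radialPotential_nonpos (h0 : ∀ y, 0 ≤ ρ y) :
    ∫ y, (if ‖y‖ < r then -ρ y / r ^ 2 else 0) ≤ 0 := by
  refine integral_nonpos fun y ↦ ?_
  dsimp only [Pi.zero_apply]
  split_ifs
  · exact div_nonpos_of_nonpos_of_nonneg (neg_nonpos.2 (h0 y)) (sq_nonneg r)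
  · exact le_rfl

theorem ae_eq_zero_of_radialPotential_eq (h0 : ∀ y, 0 ≤ ρ y) (hm : AEStronglyMeasurable ρ)
    (hr : 0 < r) (hrs : r < s) (hne : radialPotential ρ r ≠ 0)
    (heq : radialPotential ρ r = radialPotential ρ s) : ∀ᵐ y, ‖y‖ < s → ρ y = 0 := by
  have hanti (y : Rd) : ρ y / max s ‖y‖ ≤ ρ y / max r ‖y‖ :=
    div_le_div_of_nonneg_left (h0 y) (hr.trans_le (le_max_left _ _)) (max_le_max_right _ hrs.le)
  have hir : Integrable fun y ↦ ρ y / max r ‖y‖ := Integrable.of_integral_ne_zero hne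
  have his : Integrable fun y ↦ ρ y / max s ‖y‖ := by
    refine hir.mono' (hm.aemeasurable.div (by fun_prop)).aestronglyMeasurable
      (ae_of_all _ fun y ↦ ?_)
    rw [Real.norm_of_nonneg (div_nonneg (h0 y) (le_max_of_le_right (norm_nonneg _)))]
    exact hanti y
  have hzero : ∫ y, (ρ y / max r ‖y‖ - ρ y / max s ‖y‖) = 0 := by
    rw [integral_sub hir his, sub_eq_zero]
    exact heq
  rw [integral_eq_zero_iff_of_nonneg (fun y ↦ sub_nonneg.2 (hanti y)) (hir.sub his)] at hzero
  filter_upwards [hzero] with y hy hys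
  have hmax : max r ‖y‖ < max s ‖y‖ := by
    rw [max_eq_left hys.le]
    exact max_lt hrs hys
  by_contra hne
  exact (div_lt_div_of_pos_left ((h0 y).lt_of_ne' hne) (hr.trans_le (le_max_left _ _)) hmax).ne'
    (sub_eq_zero.1 hy)

theorem measure_eq_zero_of_forall_measure_inter_ball {E : Type*} [NormedAddCommGroup E]
    [NormedSpace ℝ E] [FiniteDimensional ℝ E] [Nontrivial E] [MeasurableSpace E] [BorelSpace E]
    {μ : Measure E} [μ.IsAddHaarMeasure] {A : Set E}
    (h : ∀ x ∈ A, μ (A ∩ Metric.ball 0 ‖x‖) = 0) : μ A = 0 := by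
  by_contra hA
  obtain ⟨x, hxA, hx⟩ := exists_mem_forall_mem_nhdsWithin_pos_measure hA
  by_cases hy : ∃ y ∈ A, ‖x‖ < ‖y‖
  · obtain ⟨y, hyA, hxy⟩ := hy
    refine (hx _ ?_).ne' (h y hyA)
    exact inter_mem self_mem_nhdsWithin
      (mem_nhdsWithin_of_mem_nhds (Metric.isOpen_ball.mem_nhds (mem_ball_zero_iff.2 hxy)))
  · push Not at hy
    refine hA (measure_mono_null (fun y hyA ↦ ?_)
      (measure_union_null (h x hxA) (Measure.addHaar_sphere μ (0 : E) ‖x‖)))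
    rcases (hy y hyA).lt_or_eq with hlt | heq
    · exact Or.inl ⟨hyA, mem_ball_zero_iff.2 hlt⟩
    · exact Or.inr (mem_sphere_zero_iff_norm.2 heq)

theorem aestronglyMeasurable_of_newton_ne_zero {x : Rd} (h : newton (fun y ↦ (ρ y : ℂ)) x ≠ 0) :
    AEStronglyMeasurable ρ := by
  have hint : Integrable fun y ↦ (ρ y : ℂ) / (‖x - y‖ : ℂ) := Integrable.of_integral_ne_zero h
  refine (hint.re.aestronglyMeasurable.mul (g := fun y ↦ ‖x - y‖)
    (by fun_prop : Continuous fun y ↦ ‖x - y‖).aestronglyMeasurable).congr ?_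
  filter_upwards [compl_mem_ae_iff.2 (measure_singleton (μ := volume) x)] with y hy
  have hne : ‖x - y‖ ≠ 0 := norm_ne_zero_iff.2 (sub_ne_zero.2 fun h ↦ hy h.symm)
  rw [Pi.mul_apply, ← Complex.ofReal_div]
  exact div_mul_cancel₀ (ρ y) hne

/-- The potential equals `1` wherever `Q ≠ 0`, whereas it strictly decreases outside any ball
carrying mass. -/
theorem ae_eq_zero_of_eq_newton_mul {Q : Rd → ℂ} (hQ : IsRadial Q)
    (heq : ∀ x, Q x = newton (fun y ↦ (‖Q y‖ : ℂ) ^ 2) x * Q x) : Q =ᵐ[volume] 0 := by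
  set ρ : Rd → ℝ := fun y ↦ ‖Q y‖ ^ 2 with hρ
  have hnewton {x : Rd} (hx : Q x ≠ 0) : newton (fun y ↦ (ρ y : ℂ)) x = 1 := by
    simpa [hρ, hx] using (heq x).symm
  have hm {x : Rd} (hx : Q x ≠ 0) : AEStronglyMeasurable ρ :=
    aestronglyMeasurable_of_newton_ne_zero (by rw [hnewton hx]; exact one_ne_zero)
  have h0 (y : Rd) : 0 ≤ ρ y := sq_nonneg _
  have hpot {x : Rd} (hx : x ≠ 0 ∧ Q x ≠ 0) : radialPotential ρ ‖x‖ = 1 := by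
    have h := newton_eq_radialPotential (fun x y hxy ↦ by simp only [hρ, hQ x y hxy]) (hm hx.2) h0
      hx.1
    exact_mod_cast h.symm.trans (hnewton hx.2)
  have hnull : volume {x : Rd | x ≠ 0 ∧ Q x ≠ 0} = 0 := by
    refine measure_eq_zero_of_forall_measure_inter_ball fun x hx ↦ ?_
    rcases ({x : Rd | x ≠ 0 ∧ Q x ≠ 0} ∩ Metric.ball 0 ‖x‖).eq_empty_or_nonempty with he | ⟨y, hy⟩
    · rw [he, measure_empty]
    · have hyx := mem_ball_zero_iff.1 hy.2
      have hpy := hpot hy.1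
      refine measure_mono_null ?_ (ae_iff.1 (ae_eq_zero_of_radialPotential_eq h0 (hm hx.2)
        (norm_pos_iff.2 hy.1.1) hyx (by rw [hpy]; exact one_ne_zero) (hpy.trans (hpot hx).symm)))
      rintro z ⟨hz, hzx⟩ hzero
      exact hz.2 (by simpa [hρ] using hzero (mem_ball_zero_iff.1 hzx))
  filter_upwards [compl_mem_ae_iff.2 hnull,
    compl_mem_ae_iff.2 (measure_singleton (μ := volume) (0 : Rd))] with x hx hx0
  exact not_not.1 fun h ↦ hx ⟨hx0, h⟩

end RadialPotential

section Fourier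

variable {V E : Type*} [NormedAddCommGroup V] [InnerProductSpace ℝ V] [FiniteDimensional ℝ V]
  [MeasurableSpace V] [BorelSpace V] [NormedAddCommGroup E] [NormedSpace ℂ E] {f : V → E}

theorem continuous_fourier (hf : Integrable f) : Continuous (𝓕 f) :=
  VectorFourier.fourierIntegral_continuous Real.continuous_fourierChar continuous_inner hf

theorem continuous_fourierInv (hf : Integrable f) : Continuous (𝓕⁻ f) := by
  rw [Real.fourierInv_eq_fourier_comp_neg]
  exact continuous_fourier hf.comp_neg

theorem norm_fourier_le (f : V → E) (ξ : V) : ‖𝓕 f ξ‖ ≤ ∫ x, ‖f x‖ :=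
  VectorFourier.norm_fourierIntegral_le_integral_norm _ _ _ _ _

theorem norm_fourierInv_le (f : V → E) (x : V) : ‖𝓕⁻ f x‖ ≤ ∫ ξ, ‖f ξ‖ := by
  rw [Real.fourierInv_eq_fourier_neg]
  exact norm_fourier_le f _

theorem fourier_eq_zero_of_not_integrable (hf : ¬ Integrable f) : 𝓕 f = 0 := by
  ext ξ
  exact integral_undef fun h ↦ hf ((Real.fourierIntegral_convergent_iff ξ).1 h)

theorem fourierInv_eq_zero_of_not_integrable (hf : ¬ Integrable f) : 𝓕⁻ f = 0 := by
  ext x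
  rw [Real.fourierInv_eq_fourier_neg, fourier_eq_zero_of_not_integrable hf, Pi.zero_apply,
    Pi.zero_apply]

theorem integral_fourier_smul_eq [CompleteSpace E] {g : V → ℂ} (hg : Integrable g)
    (hf : Integrable f) : ∫ ξ, 𝓕 g ξ • f ξ = ∫ x, g x • 𝓕 f x := by
  have h := VectorFourier.integral_fourierIntegral_smul_eq_flip (L := innerₗ V) (μ := volume)
    (ν := volume) Real.continuous_fourierChar continuous_inner hg hf
  rwa [flip_innerₗ] at h

theorem integral_fourierInv_smul_eq [CompleteSpace E] {g : V → ℂ} (hg : Integrable g)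
    (hf : Integrable f) : ∫ ξ, 𝓕⁻ g ξ • f ξ = ∫ x, g x • 𝓕⁻ f x := by
  rw [Real.fourierInv_eq_fourier_comp_neg g, integral_fourier_smul_eq hg.comp_neg hf,
    ← integral_neg_eq_self]
  simp only [neg_neg, Real.fourierInv_eq_fourier_neg]

theorem ae_eq_fourierInv_fourier [CompleteSpace E] (hf : Integrable f) (hF : Integrable (𝓕 f)) :
    f =ᵐ[volume] 𝓕⁻ (𝓕 f) := by
  refine ae_eq_of_integral_contDiff_smul_eq hf.locallyIntegrable
    (continuous_fourierInv hF).locallyIntegrable fun g hg hgs ↦ ?_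
  let G : SchwartzMap V ℂ := (hgs.comp_left (g := ((↑) : ℝ → ℂ)) rfl).toSchwartzMap
    (Complex.ofRealCLM.contDiff.comp hg)
  calc ∫ x, g x • f x
    _ = ∫ x, 𝓕 (𝓕⁻ G) x • f x := by
      rw [FourierTransform.fourier_fourierInv_eq]
      exact integral_congr_ae (ae_of_all _ fun x ↦ (Complex.coe_smul (g x) (f x)).symm)
    _ = ∫ ξ, (𝓕⁻ G) ξ • 𝓕 f ξ := integral_fourier_smul_eq (𝓕⁻ G).integrable hf
    _ = ∫ ξ, 𝓕⁻ (G : V → ℂ) ξ • 𝓕 f ξ := by rw [SchwartzMap.fourierInv_coe]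
    _ = ∫ x, G x • 𝓕⁻ (𝓕 f) x := integral_fourierInv_smul_eq G.integrable hF
    _ = ∫ x, g x • 𝓕⁻ (𝓕 f) x :=
      integral_congr_ae (ae_of_all _ fun x ↦ Complex.coe_smul (g x) _)

theorem integrable_fourier_of_integrable_norm_smul (hf : Integrable f)
    (hF : Integrable fun ξ ↦ ‖ξ‖ • 𝓕 f ξ) : Integrable (𝓕 f) := by
  have hball : Integrable ((Metric.ball (0 : V) 1).indicator fun _ ↦ ∫ x, ‖f x‖) :=
    (integrable_indicator_iff measurableSet_ball).2 (integrableOn_const measure_ball_lt_top.ne)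
  refine (hball.add hF.norm).mono' (continuous_fourier hf).aestronglyMeasurable
    (ae_of_all _ fun ξ ↦ ?_)
  rw [Pi.add_apply, norm_smul, norm_norm]
  by_cases hξ : ξ ∈ Metric.ball (0 : V) 1
  · rw [Set.indicator_of_mem hξ]
    exact le_add_of_le_of_nonneg (norm_fourier_le f ξ) (by positivity)
  · rw [Set.indicator_of_notMem hξ, zero_add]
    exact le_mul_of_one_le_left (norm_nonneg _) (by simpa using hξ)

end Fourier

section RadialFourier

theorem IsRadial.fourier {f : Rd → ℂ} (hf : IsRadial f) : IsRadial (𝓕 f) := by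
  intro x y hxy
  have hcomp (A : Rd ≃ₗᵢ[ℝ] Rd) : f ∘ A = f := funext fun z ↦ hf _ _ (A.norm_map z)
  rw [← Submodule.reflection_sub hxy, ← Real.fourier_comp_linearIsometry, hcomp]

theorem integral_cosineLaw_fourierChar (a : ℝ) :
    ∫ τ, (𝐞 (a * τ) : ℂ) ∂cosineLaw = sinc (2 * π * a) := by
  rw [integral_cosineLaw]
  rcases eq_or_ne a 0 with rfl | ha
  · norm_num
  have hc : 2 * π * a ≠ 0 := mul_ne_zero two_pi_pos.ne' ha
  calc (1 / 2 : ℝ) • ∫ τ in (-1 : ℝ)..1, (𝐞 (a * τ) : ℂ)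
    _ = (1 / 2 : ℝ) • ∫ τ in (-1 : ℝ)..1, cexp ((2 * π * a * τ : ℝ) * I) := by
      simp only [Real.fourierChar_apply, mul_assoc]
    _ = (sinc (2 * π * a) : ℂ) := by
      rw [intervalIntegral.integral_comp_mul_left (fun t : ℝ ↦ cexp (t * I)) hc, mul_neg_one,
        mul_one, integral_exp_mul_I_eq_sinc, Complex.real_smul, Complex.real_smul]
      have ha' : (a : ℂ) ≠ 0 := Complex.ofReal_ne_zero.2 ha
      push_cast
      field_simp

theorem IsRadial.fourierInv_eq_integral_sinc {F : Rd → ℂ} (hF : IsRadial F) (hi : Integrable F)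
    (x : Rd) : 𝓕⁻ F x = ∫ ξ, (sinc (2 * π * ‖ξ‖ * ‖x‖) : ℂ) * F ξ := by
  obtain ⟨g, hg, hFg⟩ := exists_stronglyMeasurable_comp_norm hF hi.aestronglyMeasurable
  let u : ℝ × ℝ → ℂ := fun q ↦ (𝐞 q.2 : ℂ) * g q.1
  have hu : StronglyMeasurable u :=
    (by fun_prop : Continuous fun q : ℝ × ℝ ↦ (𝐞 q.2 : ℂ)).stronglyMeasurable.mul
      (hg.comp_measurable measurable_fst)
  have hid := (identDistrib_norm_inner x).comp hu.measurable
  have hint : Integrable (u ∘ fun ξ : Rd ↦ (‖ξ‖, inner ℝ x ξ)) := by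
    refine (hi.congr hFg).norm.mono' hid.aestronglyMeasurable_fst (ae_of_all _ fun ξ ↦ ?_)
    rw [Function.comp_apply, norm_mul, Circle.norm_coe, one_mul]
  calc 𝓕⁻ F x
    _ = ∫ ξ, u (‖ξ‖, inner ℝ x ξ) := by
      rw [Real.fourierInv_eq]
      refine integral_congr_ae (hFg.mono fun ξ hξ ↦ ?_)
      simp only [u, ← hξ, real_inner_comm ξ x, Circle.smul_def, smul_eq_mul]
    _ = ∫ p, u (‖p.1‖, ‖x‖ * ‖p.1‖ * p.2) ∂(volume.prod cosineLaw) := hid.integral_eq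
    _ = ∫ ξ, ∫ τ, u (‖ξ‖, ‖x‖ * ‖ξ‖ * τ) ∂cosineLaw := integral_prod _ (hid.integrable_iff.1 hint)
    _ = ∫ ξ, (sinc (2 * π * ‖ξ‖ * ‖x‖) : ℂ) * F ξ := by
      refine integral_congr_ae (hFg.mono fun ξ hξ ↦ ?_)
      simp only [u, integral_mul_const, integral_cosineLaw_fourierChar, ← hξ]
      rw [mul_comm ‖x‖, ← mul_assoc]

theorem IsRadial.apply_fourierInv_eq_sincTransform {F : Rd → ℂ} (hF : IsRadial F)
    (hi : Integrable F) (ℓ : ℂ →L[ℝ] ℝ) (x : Rd) :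
    ℓ (𝓕⁻ F x) = sincTransform volume (fun ξ ↦ 2 * π * ‖ξ‖) (fun ξ ↦ ℓ (F ξ)) ‖x‖ := by
  rw [hF.fourierInv_eq_integral_sinc hi, ← ℓ.integral_comp_comm]
  · simp only [← Complex.real_smul, map_smul, smul_eq_mul, sincTransform, mul_comm (sinc _)]
  · refine hi.bdd_mul (c := 1) ?_ (ae_of_all _ fun ξ ↦ ?_)
    · exact (Complex.continuous_ofReal.comp
        (continuous_sinc.comp (by fun_prop))).aestronglyMeasurable
    · rw [Complex.norm_real]
      exact abs_sinc_le_one _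

end RadialFourier

section ConstantPhase

theorem integrable_norm_sq_of_integrable_fourier {V E : Type*} [NormedAddCommGroup V]
    [InnerProductSpace ℝ V] [FiniteDimensional ℝ V] [MeasurableSpace V] [BorelSpace V]
    [NormedAddCommGroup E] [NormedSpace ℂ E] [CompleteSpace E] {f : V → E} (hf : Integrable f)
    (hF : Integrable (𝓕 f)) : Integrable fun x ↦ ‖f x‖ ^ 2 := by
  simp_rw [sq]
  refine hf.norm.mul_bdd (c := ∫ ξ, ‖𝓕 f ξ‖) hf.norm.aestronglyMeasurable ?_
  filter_upwards [ae_eq_fourierInv_fourier hf hF] with x hx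
  rw [norm_norm, hx]
  exact norm_fourierInv_le _ x

variable {Q : Rd → ℂ}

theorem sqrtOp_zero_eq (Q : Rd → ℂ) : sqrtOp 0 Q = 𝓕⁻ fun ξ ↦ ‖ξ‖ • 𝓕 Q ξ := by
  simp only [sqrtOp, add_zero, Real.sqrt_sq (norm_nonneg _), Complex.real_smul]

theorem integrable_of_sqrtOp_ne_zero (h : sqrtOp 0 Q ≠ 0) :
    Integrable Q ∧ Integrable fun ξ ↦ ‖ξ‖ • 𝓕 Q ξ := by
  rw [sqrtOp_zero_eq] at h
  constructor <;> by_contra hQ <;> refine h ?_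
  · rw [fourier_eq_zero_of_not_integrable hQ]
    ext x
    simp [Real.fourierInv_eq]
  · exact fourierInv_eq_zero_of_not_integrable hQ

theorem isSpectralDensity_apply_fourier (hQ : Integrable Q)
    (hmul : Integrable fun ξ ↦ ‖ξ‖ • 𝓕 Q ξ) (ℓ : ℂ →L[ℝ] ℝ) :
    IsSpectralDensity volume (fun ξ : Rd ↦ 2 * π * ‖ξ‖) fun ξ ↦ ℓ (𝓕 Q ξ) where
  aemeasurable := by fun_prop
  pos := by
    filter_upwards [ae_norm_ne 0] with ξ hξ using by positivity
  integrable := ℓ.integrable_comp (integrable_fourier_of_integrable_norm_smul hQ hmul)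
  integrable_mul := by
    simpa only [map_smul, smul_eq_mul, mul_assoc] using
      (ℓ.integrable_comp hmul).const_mul (2 * π)

theorem sqrtOp_eq_radialPotential_mul (hrad : IsRadial Q) (hQ : Integrable Q)
    (hmul : Integrable fun ξ ↦ ‖ξ‖ • 𝓕 Q ξ)
    (heq : ∀ x, sqrtOp 0 Q x + Q x - newton (fun y ↦ (‖Q y‖ : ℂ) ^ 2) x * Q x = 0)
    {x : Rd} (hx : x ≠ 0) :
    sqrtOp 0 Q x = ((radialPotential (fun y ↦ ‖Q y‖ ^ 2) ‖x‖ - 1 : ℝ) : ℂ) * 𝓕⁻ (𝓕 Q) x := by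
  set V := radialPotential fun y ↦ ‖Q y‖ ^ 2
  have hF := integrable_fourier_of_integrable_norm_smul hQ hmul
  have hρ := integrable_norm_sq_of_integrable_fourier hQ hF
  have hnewton {y : Rd} (hy : y ≠ 0) : newton (fun z ↦ (‖Q z‖ : ℂ) ^ 2) y = V ‖y‖ := by
    exact_mod_cast newton_eq_radialPotential (fun x y hxy ↦ by rw [hrad x y hxy])
      hρ.aestronglyMeasurable (fun y ↦ sq_nonneg _) hy
  have hVcont : ContinuousOn (fun y : Rd ↦ ((V ‖y‖ - 1 : ℝ) : ℂ) * 𝓕⁻ (𝓕 Q) y) {0}ᶜ := by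
    refine ContinuousOn.mul (Complex.continuous_ofReal.comp_continuousOn fun y hy ↦ ?_)
      (continuous_fourierInv hF).continuousOn
    exact (((hasDerivAt_radialPotential hρ (norm_pos_iff.2 hy)).continuousAt.comp
      continuous_norm.continuousAt).sub continuousAt_const).continuousWithinAt
  refine Measure.eqOn_open_of_ae_eq (μ := volume) (ae_restrict_of_ae ?_)
    isOpen_compl_singleton ?_ hVcont hx
  · filter_upwards [ae_eq_fourierInv_fourier hQ hF, ae_norm_ne 0] with y hy hy0
    have h := heq y
    rw [hnewton (norm_ne_zero_iff.1 hy0)] at h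
    rw [← hy]
    push_cast
    linear_combination h
  · rw [sqrtOp_zero_eq]
    exact (continuous_fourierInv hmul).continuousOn

theorem apply_fourierInv_fourier_eq_zero (hrad : IsRadial Q) (hQ : Integrable Q)
    (hmul : Integrable fun ξ ↦ ‖ξ‖ • 𝓕 Q ξ)
    (heq : ∀ x, sqrtOp 0 Q x + Q x - newton (fun y ↦ (‖Q y‖ : ℂ) ^ 2) x * Q x = 0)
    {ℓ : ℂ →L[ℝ] ℝ} (hℓ : ℓ (𝓕⁻ (𝓕 Q) 0) = 0) {x : Rd} (hx : x ≠ 0) :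
    ℓ (𝓕⁻ (𝓕 Q) x) = 0 := by
  have hF := integrable_fourier_of_integrable_norm_smul hQ hmul
  have hρ := integrable_norm_sq_of_integrable_fourier hQ hF
  set ρ : Rd → ℝ := fun y ↦ ‖Q y‖ ^ 2
  have hP := hrad.fourier.apply_fourierInv_eq_sincTransform hF ℓ
  have hradmul : IsRadial fun ξ ↦ ‖ξ‖ • 𝓕 Q ξ := fun ξ η h ↦ by
    simp only [h, hrad.fourier ξ η h]
  rw [hP]
  refine (isSpectralDensity_apply_fourier hQ hmul ℓ).sincTransform_eq_zero
    (M := 2 * π * (1 + ∫ y, |ρ y|)) (w := fun r ↦ 2 * π * (radialPotential ρ r - 1))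
    (w' := fun r ↦ 2 * π * ∫ y, if ‖y‖ < r then -ρ y / r ^ 2 else 0)
    (fun r hr ↦ ?_) (fun r hr ↦ ?_) (fun r _ ↦ ?_) ?_ (fun r hr ↦ ?_) (norm_pos_iff.2 hx)
  · rw [abs_mul, abs_of_pos two_pi_pos, mul_assoc (2 * π)]
    exact mul_le_mul_of_nonneg_left (abs_radialPotential_sub_one_le hρ hr) two_pi_pos.le
  · exact ((hasDerivAt_radialPotential hρ hr).sub_const 1).const_mul (2 * π)
  · exact mul_nonpos_of_nonneg_of_nonpos two_pi_pos.le
      (deriv_radialPotential_nonpos fun y ↦ sq_nonneg ‖Q y‖)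
  · simpa [sincTransform, hP] using hℓ
  · obtain ⟨y, rfl⟩ := exists_norm_eq Rd hr.le
    have h := congrArg ℓ (sqrtOp_eq_radialPotential_mul hrad hQ hmul heq (norm_pos_iff.1 hr))
    rw [sqrtOp_zero_eq, hradmul.apply_fourierInv_eq_sincTransform hmul, ← Complex.real_smul,
      map_smul, hP, smul_eq_mul] at h
    rw [mul_assoc, ← h, sincTransform, sincTransform, ← integral_const_mul]
    simp only [map_smul, smul_eq_mul, mul_assoc]

theorem sqrtOp_ne_zero (hrad : IsRadial Q) (hne : eLpNorm Q 2 volume ≠ 0)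
    (heq : ∀ x, sqrtOp 0 Q x + Q x - newton (fun y ↦ (‖Q y‖ : ℂ) ^ 2) x * Q x = 0) :
    sqrtOp 0 Q ≠ 0 := by
  intro h
  refine hne ?_
  rw [eLpNorm_congr_ae (ae_eq_zero_of_eq_newton_mul hrad fun x ↦ ?_), eLpNorm_zero]
  have := heq x
  rwa [h, Pi.zero_apply, zero_add, sub_eq_zero] at this

theorem memLp_two_of_sqrtOp_ne_zero (h : sqrtOp 0 Q ≠ 0) : MemLp Q 2 := by
  obtain ⟨hQ, hmul⟩ := integrable_of_sqrtOp_ne_zero h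
  exact (memLp_two_iff_integrable_sq_norm hQ.aestronglyMeasurable).2
    (integrable_norm_sq_of_integrable_fourier hQ
      (integrable_fourier_of_integrable_norm_smul hQ hmul))

theorem mem_span_singleton_of_im_conj_mul_eq_zero {c z : ℂ} (hc : c ≠ 0)
    (h : (starRingEnd ℂ c * z).im = 0) : z ∈ Submodule.span ℝ {c} := by
  refine Submodule.mem_span_singleton.2 ⟨(starRingEnd ℂ c * z).re / normSq c, ?_⟩
  have hz : (((starRingEnd ℂ c * z).re : ℝ) : ℂ) = starRingEnd ℂ c * z := by
    rw [← re_add_im (starRingEnd ℂ c * z), h]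
    simp
  have hc' : starRingEnd ℂ c ≠ 0 := (map_ne_zero _).2 hc
  rw [Complex.real_smul, Complex.ofReal_div, hz, ← Complex.mul_conj]
  field_simp

theorem exists_ae_mem_span_singleton (hrad : IsRadial Q) (h0 : sqrtOp 0 Q ≠ 0)
    (heq : ∀ x, sqrtOp 0 Q x + Q x - newton (fun y ↦ (‖Q y‖ : ℂ) ^ 2) x * Q x = 0) :
    ∃ c : ℂ, ∀ᵐ x, Q x ∈ Submodule.span ℝ {c} := by
  obtain ⟨hQ, hmul⟩ := integrable_of_sqrtOp_ne_zero h0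
  set P := 𝓕⁻ (𝓕 Q)
  obtain ⟨c, hc, hc0⟩ : ∃ c : ℂ, c ≠ 0 ∧ (starRingEnd ℂ c * P 0).im = 0 := by
    by_cases hP0 : P 0 = 0
    · exact ⟨1, one_ne_zero, by simp [hP0]⟩
    · exact ⟨P 0, hP0, by rw [← normSq_eq_conj_mul_self, ofReal_im]⟩
  refine ⟨c, ?_⟩
  filter_upwards [ae_eq_fourierInv_fourier hQ (integrable_fourier_of_integrable_norm_smul hQ hmul),
    ae_norm_ne 0] with x hx hx0
  rw [hx]
  exact mem_span_singleton_of_im_conj_mul_eq_zero hc <|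
    apply_fourierInv_fourier_eq_zero hrad hQ hmul heq
      (ℓ := imCLM ∘L (ContinuousLinearMap.mul ℝ ℂ (starRingEnd ℂ c))) hc0 (norm_ne_zero_iff.1 hx0)

end ConstantPhase

section Dilation

section AddHaar

variable {E F : Type*} [NormedAddCommGroup E] [NormedSpace ℝ E] [MeasurableSpace E] [BorelSpace E]
  [FiniteDimensional ℝ E] {μ : Measure E} [μ.IsAddHaarMeasure] {r : ℝ}

theorem eLpNorm_comp_smul [NormedAddCommGroup F] {p : ℝ≥0∞} (hp : p ≠ ∞) (hr : r ≠ 0)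
    (f : E → F) :
    eLpNorm (fun x ↦ f (r • x)) p μ =
      ENNReal.ofReal |(r ^ Module.finrank ℝ E)⁻¹| ^ (1 / p).toReal * eLpNorm f p μ := by
  have h := (Homeomorph.smulOfNeZero r hr).measurableEmbedding.eLpNorm_map_measure (μ := μ)
    (g := f) (p := p)
  change eLpNorm f p (μ.map (r • ·)) = _ at h
  rw [Measure.map_addHaar_smul μ hr, eLpNorm_smul_measure_of_ne_top hp] at h
  exact h.symm

end AddHaar

variable {f : Rd → ℂ} {a b : ℝ}

theorem IsRadial.qScale (hf : IsRadial f) (a : ℝ) : IsRadial (qScale f a) := fun x y hxy ↦ by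
  rw [_root_.qScale, _root_.qScale, hf (a • x) (a • y) (by rw [norm_smul, norm_smul, hxy])]

theorem qScale_qScale (ha : 0 ≤ a) (hb : 0 ≤ b) : qScale (qScale f a) b = qScale f (b * a) := by
  ext x
  rw [qScale, qScale, qScale, smul_smul, Real.mul_rpow hb ha, mul_comm a b]
  push_cast
  ring

theorem qScale_one (f : Rd → ℂ) : qScale f 1 = f := by
  ext x
  simp [qScale]

theorem qScale_sub (f g : Rd → ℂ) (a : ℝ) : qScale (f - g) a = qScale f a - qScale g a := by
  ext x
  exact mul_sub _ _ _

theorem eLpNorm_qScale (ha : 0 < a) (f : Rd → ℂ) :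
    eLpNorm (qScale f a) 2 volume = eLpNorm f 2 volume := by
  have hexp : ‖((a ^ (3 / 2 : ℝ) : ℝ) : ℂ)‖ₑ * ENNReal.ofReal ((a ^ 3)⁻¹) ^ (1 / 2 : ℝ) = 1 := by
    rw [← ofReal_norm, Complex.norm_real, Real.norm_of_nonneg (by positivity),
      ENNReal.ofReal_rpow_of_pos (by positivity), ← ENNReal.ofReal_mul (by positivity),
      Real.inv_rpow (by positivity), ← Real.rpow_natCast_mul ha.le]
    norm_num [mul_inv_cancel₀ (Real.rpow_pos_of_pos ha _).ne']
  change eLpNorm (((a ^ (3 / 2 : ℝ) : ℝ) : ℂ) • fun x ↦ f (a • x)) 2 volume = _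
  rw [eLpNorm_const_smul, eLpNorm_comp_smul ENNReal.ofNat_ne_top ha.ne', finrank_euclideanSpace_fin,
    abs_of_pos (by positivity), ← mul_assoc]
  convert one_mul _
  simpa using hexp

theorem memLp_qScale (ha : 0 < a) (hf : MemLp f 2) : MemLp (qScale f a) 2 :=
  ⟨(hf.1.comp_quasiMeasurePreserving
    (Measure.quasiMeasurePreserving_smul volume ha.ne')).const_mul _,
    (eLpNorm_qScale ha f).trans_lt hf.2⟩

theorem continuousOn_integral_norm_qScale_sub_sq {g : Rd → ℂ} (hg : Continuous g)
    (hgs : HasCompactSupport g) :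
    ContinuousOn (fun a ↦ ∫ x, ‖qScale g a x - g x‖ ^ 2) (Set.Ioi (1 / 2)) := by
  obtain ⟨R, hR, hgR⟩ := hgs.exists_pos_le_norm
  refine continuousOn_integral_of_compact_support (isCompact_closedBall (0 : Rd) (2 * R)) ?_ ?_
  · have hpow : ContinuousOn (fun p : ℝ × Rd ↦ p.1 ^ (3 / 2 : ℝ)) (Set.Ioi (1 / 2) ×ˢ .univ) :=
      (Real.continuous_rpow_const (by norm_num)).comp_continuousOn continuousOn_fst
    simp only [Function.uncurry_def, qScale]
    fun_prop
  · intro a x ha hx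
    rw [mem_closedBall_zero_iff, not_le] at hx
    have hax : R ≤ ‖a • x‖ := by
      rw [norm_smul, Real.norm_of_nonneg (by linarith [Set.mem_Ioi.1 ha])]
      nlinarith [Set.mem_Ioi.1 ha]
    simp [qScale, hgR _ hax, hgR x (by linarith)]

theorem tendsto_eLpNorm_qScale_sub_of_hasCompactSupport {g : Rd → ℂ} (hg : Continuous g)
    (hgs : HasCompactSupport g) :
    Tendsto (fun a ↦ eLpNorm (qScale g a - g) 2 volume) (𝓝 1) (𝓝 0) := by
  have hgL : MemLp g 2 := hg.memLp_of_hasCompactSupport hgs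
  have hint : Tendsto (fun a ↦ ∫ x, ‖qScale g a x - g x‖ ^ 2) (𝓝 1) (𝓝 0) := by
    simpa [qScale_one] using ((continuousOn_integral_norm_qScale_sub_sq hg hgs).continuousAt
      (Ioi_mem_nhds one_half_lt_one)).tendsto
  have hsqrt := ENNReal.tendsto_ofReal (hint.rpow_const (p := 2⁻¹) (Or.inr (by norm_num)))
  rw [Real.zero_rpow (by norm_num), ENNReal.ofReal_zero] at hsqrt
  refine hsqrt.congr' ?_
  filter_upwards [lt_mem_nhds zero_lt_one] with a ha
  rw [((memLp_qScale ha hgL).sub hgL).eLpNorm_eq_integral_rpow_norm two_ne_zero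
    ENNReal.ofNat_ne_top]
  simp

theorem tendsto_eLpNorm_qScale_sub (hf : MemLp f 2) :
    Tendsto (fun a ↦ eLpNorm (qScale f a - f) 2 volume) (𝓝 1) (𝓝 0) := by
  refine ENNReal.tendsto_nhds_zero.2 fun ε hε ↦ ?_
  have hε3 : ε / 3 ≠ 0 := (ENNReal.div_pos hε.ne' ENNReal.ofNat_ne_top).ne'
  obtain ⟨g, hgs, hfg, hg, hgL⟩ := hf.exists_hasCompactSupport_eLpNorm_sub_le
    ENNReal.ofNat_ne_top hε3
  filter_upwards [ENNReal.tendsto_nhds_zero.1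
    (tendsto_eLpNorm_qScale_sub_of_hasCompactSupport hg hgs) _ hε3.bot_lt,
    lt_mem_nhds zero_lt_one] with a hag ha
  have hfga : eLpNorm (qScale f a - qScale g a) 2 volume ≤ ε / 3 := by
    rwa [← qScale_sub, eLpNorm_qScale ha]
  calc eLpNorm (qScale f a - f) 2 volume
      = eLpNorm ((qScale f a - qScale g a) + (qScale g a - g) + (g - f)) 2 volume := by
        congr 1; abel
    _ ≤ ε / 3 + ε / 3 + ε / 3 := by
        refine (eLpNorm_add_le (((memLp_qScale ha hf).sub (memLp_qScale ha hgL)).add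
          ((memLp_qScale ha hgL).sub hgL)).1 (hgL.sub hf).1 one_le_two).trans ?_
        gcongr
        · refine (eLpNorm_add_le ((memLp_qScale ha hf).sub (memLp_qScale ha hgL)).1
            ((memLp_qScale ha hgL).sub hgL).1 one_le_two).trans ?_
          gcongr
        · rwa [eLpNorm_sub_comm]
    _ = ε := ENNReal.add_thirds ε

theorem eLpNorm_qScale_mul_sub_qScale (ha : 0 < a) (hb : 0 < b) (f : Rd → ℂ) :
    eLpNorm (qScale f (a * b) - qScale f a) 2 volume = eLpNorm (qScale f b - f) 2 volume := by
  rw [← qScale_qScale hb.le ha.le, ← qScale_sub, eLpNorm_qScale ha]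

end Dilation

section Phase

theorem sq_eLpNorm_sub_of_ae_inner_eq_zero {α E : Type*} [MeasurableSpace α] {μ : Measure α}
    [NormedAddCommGroup E] [InnerProductSpace ℝ E] {f g : α → E} (hf : AEStronglyMeasurable f μ)
    (h : ∀ᵐ x ∂μ, inner ℝ (f x) (g x) = 0) :
    eLpNorm (f - g) 2 μ ^ 2 = eLpNorm f 2 μ ^ 2 + eLpNorm g 2 μ ^ 2 := by
  have hsq (u : α → E) : eLpNorm u 2 μ ^ 2 = ∫⁻ x, ‖u x‖ₑ ^ 2 ∂μ := by
    simpa using eLpNorm_nnreal_pow_eq_lintegral (f := u) (μ := μ) (p := 2) two_ne_zero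
  rw [hsq, hsq, hsq, ← lintegral_add_left' (hf.enorm.pow_const 2)]
  refine lintegral_congr_ae ?_
  filter_upwards [h] with x hx
  simp only [Pi.sub_apply, ← ofReal_norm, ← ENNReal.ofReal_pow (norm_nonneg _)]
  rw [← ENNReal.ofReal_add (sq_nonneg _) (sq_nonneg _), norm_sub_sq_real, hx]
  ring_nf

theorem inner_exp_mul_exp_mul_eq_zero {c z w : ℂ} (hz : z ∈ Submodule.span ℝ {c})
    (hw : w ∈ Submodule.span ℝ {c}) {α β : ℝ} (h : Real.cos (α - β) = 0) :
    inner ℝ (exp (I * α) * z) (exp (I * β) * w) = 0 := by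
  obtain ⟨r, rfl⟩ := Submodule.mem_span_singleton.1 hz
  obtain ⟨s, rfl⟩ := Submodule.mem_span_singleton.1 hw
  have hphase : starRingEnd ℂ (exp (I * α)) * exp (I * β) = exp ((β - α : ℝ) * I) := by
    rw [← exp_conj, ← Complex.exp_add, map_mul, conj_I, conj_ofReal]
    congr 1
    push_cast
    ring
  have hcos : (exp ((β - α : ℝ) * I)).re = 0 := by
    rw [exp_ofReal_mul_I_re, ← neg_sub, Real.cos_neg, h]
  calc inner ℝ (exp (I * α) * r • c) (exp (I * β) * s • c)
      = (((r * s * normSq c : ℝ) : ℂ) * (starRingEnd ℂ (exp (I * α)) * exp (I * β))).re := by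
        rw [Complex.inner, ofReal_mul, normSq_eq_conj_mul_self]
        simp only [map_mul, real_smul, conj_ofReal, ofReal_mul]
        ring_nf
    _ = 0 := by rw [hphase, re_ofReal_mul, hcos, mul_zero]

variable {Q : Rd → ℂ} {a b t : ℝ}

theorem sq_eLpNorm_solWave_sub (hQ : MemLp Q 2)
    (hphase : ∃ c : ℂ, ∀ᵐ x, Q x ∈ Submodule.span ℝ {c}) (ha : 0 < a) (hb : 0 < b)
    (hcos : Real.cos (t * a - t * b) = 0) :
    eLpNorm (solWave Q a t - solWave Q b t) 2 volume ^ 2 = 2 * eLpNorm Q 2 volume ^ 2 := by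
  obtain ⟨c, hc⟩ := hphase
  have hscale {μ : ℝ} (hμ : 0 < μ) : ∀ᵐ x, qScale Q μ x ∈ Submodule.span ℝ {c} := by
    filter_upwards [(Measure.quasiMeasurePreserving_smul volume hμ.ne').ae hc] with x hx
    rw [qScale, ← Complex.real_smul]
    exact Submodule.smul_mem _ _ hx
  have hnorm {μ : ℝ} (hμ : 0 < μ) : eLpNorm (solWave Q μ t) 2 volume = eLpNorm Q 2 volume := by
    rw [← eLpNorm_qScale hμ Q]
    refine eLpNorm_congr_norm_ae (.of_forall fun x ↦ ?_)
    simp only [solWave, norm_mul, norm_exp_I_mul_ofReal, one_mul]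
  have hinner : ∀ᵐ x, inner ℝ (solWave Q a t x) (solWave Q b t x) = 0 := by
    filter_upwards [hscale ha, hscale hb] with x hxa hxb
    exact inner_exp_mul_exp_mul_eq_zero hxa hxb hcos
  have hmeas : AEStronglyMeasurable (solWave Q a t) := (memLp_qScale ha hQ).1.const_mul _
  rw [sq_eLpNorm_sub_of_ae_inner_eq_zero hmeas hinner, hnorm ha, hnorm hb, two_mul]

theorem cos_mul_sub_mul_eq_zero (ht : t ≠ 0) (n : ℕ) :
    Real.cos (t * (π / (2 * t) * ((n : ℝ) + 1) ^ 2) - t * (π / (2 * t) * (n : ℝ) ^ 2)) = 0 := by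
  have h : t * (π / (2 * t) * ((n : ℝ) + 1) ^ 2) - t * (π / (2 * t) * (n : ℝ) ^ 2)
      = π / 2 + n * π := by
    field_simp
    ring
  rw [h, Real.cos_add_nat_mul_pi, Real.cos_pi_div_two, mul_zero]

theorem tendsto_eLpNorm_qScale_sub_qScale (hQ : MemLp Q 2) (ha : 0 < a) :
    Tendsto (fun n : ℕ ↦ eLpNorm (qScale Q (a * ((n : ℝ) + 1) ^ 2) - qScale Q (a * (n : ℝ) ^ 2)) 2
      volume) atTop (𝓝 0) := by
  have hratio : Tendsto (fun n : ℕ ↦ (1 + 1 / (n : ℝ)) ^ 2) atTop (𝓝 1) := by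
    simpa using ((tendsto_one_div_atTop_nhds_zero_nat (𝕜 := ℝ)).const_add 1).pow 2
  refine ((tendsto_eLpNorm_qScale_sub hQ).comp hratio).congr' ?_
  filter_upwards [eventually_gt_atTop 0] with n hn
  have : (0 : ℝ) < n := Nat.cast_pos.2 hn
  have hmul : a * ((n : ℝ) + 1) ^ 2 = a * (n : ℝ) ^ 2 * (1 + 1 / (n : ℝ)) ^ 2 := by field_simp
  rw [hmul, eLpNorm_qScale_mul_sub_qScale (by positivity) (by positivity), Function.comp_apply]

end Phase

/-- solitary wave computations and failure of uniform continuity of the flow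
map of the massless boson star equation on
`M = {φ ∈ L² : φ radial, ‖φ‖_{L²}² ≥ ‖Q‖_{L²}²}`. -/
theorem uniform_continuity_fails_massless (Q : Rd → ℂ)
    (hQH : HsNorm (1 / 2) Q < ⊤) (hQrad : IsRadial Q)
    (hQne : eLpNorm Q 2 volume ≠ 0)
    (hQeq : ∀ x : Rd,
      sqrtOp 0 Q x + Q x - newton (fun y => (‖Q y‖ : ℂ) ^ 2) x * Q x = 0) :
    -- (i) the rescaling preserves the `L²` norm
    (∀ μ : ℝ, 0 < μ → eLpNorm (qScale Q μ) 2 volume = eLpNorm Q 2 volume) ∧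
    -- (ii) for fixed `t > 0` and `μ₁(n) = (π/2t)(n+1)², μ₂(n) = (π/2t)n²`:
    (∀ t : ℝ, 0 < t →
      (∀ n : ℕ, 1 ≤ n →
        (eLpNorm (fun x =>
            solWave Q (Real.pi / (2 * t) * ((n : ℝ) + 1) ^ 2) t x -
            solWave Q (Real.pi / (2 * t) * (n : ℝ) ^ 2) t x) 2 volume) ^ 2 =
          2 * (eLpNorm Q 2 volume) ^ 2) ∧
      Tendsto (fun n : ℕ =>
          eLpNorm (fun x =>
            qScale Q (Real.pi / (2 * t) * ((n : ℝ) + 1) ^ 2) x -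
            qScale Q (Real.pi / (2 * t) * (n : ℝ) ^ 2) x) 2 volume)
        atTop (𝓝 0)) ∧
    -- (iii) consequently, any flow map `φ ↦ u(t)` (which must map the solitary wave data
    -- `Q_μ` to `e^{itμ}Q_μ`) fails to be uniformly continuous on `M` in the `L²` norm
    (∀ t : ℝ, 0 < t → ∀ S : (Rd → ℂ) → (Rd → ℂ),
      (∀ μ : ℝ, 0 < μ → S (qScale Q μ) = solWave Q μ t) →
      ¬ (∀ ε : ℝ, 0 < ε → ∃ δ : ℝ, 0 < δ ∧
          ∀ φ ψ : Rd → ℂ,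
            IsRadial φ → (eLpNorm Q 2 volume) ^ 2 ≤ (eLpNorm φ 2 volume) ^ 2 →
            IsRadial ψ → (eLpNorm Q 2 volume) ^ 2 ≤ (eLpNorm ψ 2 volume) ^ 2 →
            eLpNorm (fun x => φ x - ψ x) 2 volume < ENNReal.ofReal δ →
            eLpNorm (fun x => S φ x - S ψ x) 2 volume < ENNReal.ofReal ε)) := by
  have hne := sqrtOp_ne_zero hQrad hQne hQeq
  have hQ := memLp_two_of_sqrtOp_ne_zero hne
  have hphase := exists_ae_mem_span_singleton hQrad hne hQeq
  have hpos {t : ℝ} (ht : 0 < t) {n : ℕ} (hn : 1 ≤ n) : 0 < π / (2 * t) * (n : ℝ) ^ 2 := by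
    positivity
  have hpos' {t : ℝ} (ht : 0 < t) (n : ℕ) : 0 < π / (2 * t) * ((n : ℝ) + 1) ^ 2 := by positivity
  have hfar {t : ℝ} (ht : 0 < t) {n : ℕ} (hn : 1 ≤ n) :=
    sq_eLpNorm_solWave_sub hQ hphase (hpos' ht n) (hpos ht hn) (cos_mul_sub_mul_eq_zero ht.ne' n)
  have hclose {t : ℝ} (ht : 0 < t) :=
    tendsto_eLpNorm_qScale_sub_qScale hQ (div_pos pi_pos (mul_pos two_pos ht))
  refine ⟨fun μ hμ ↦ eLpNorm_qScale hμ Q, fun t ht ↦ ⟨fun n ↦ hfar ht, hclose ht⟩,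
    fun t ht S hS hcont ↦ ?_⟩
  obtain ⟨δ, hδ, hSδ⟩ := hcont _ (ENNReal.toReal_pos hQne hQ.2.ne)
  obtain ⟨n, hnδ, hn⟩ := (((hclose ht).eventually (gt_mem_nhds (ENNReal.ofReal_pos.2 hδ))).and
    (eventually_ge_atTop 1)).exists
  have hlt := hSδ _ _ (hQrad.qScale _) (by rw [eLpNorm_qScale (hpos' ht n)]) (hQrad.qScale _)
    (by rw [eLpNorm_qScale (hpos ht hn)]) hnδ
  rw [hS _ (hpos' ht n), hS _ (hpos ht hn), ENNReal.ofReal_toReal hQ.2.ne] at hlt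
  have hle : eLpNorm Q 2 volume ^ 2 ≤ 2 * eLpNorm Q 2 volume ^ 2 :=
    le_mul_of_one_le_left' one_le_two
  exact (hle.trans (hfar ht hn).ge).not_gt (ENNReal.pow_lt_pow_left two_ne_zero hlt)
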